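/- arXiv:2108.11210 — 8 statements merged into one kernel-verified Lean document; each statement's English description precedes it below -/
import Mathlib

section
/- Let m ∈ {2,3,4,...}, q = m − 3/2, and let β > 0 be fixed. Define A_m = (−1)^{m+1}/(m! Γ(−1/2)), P_{m,k} = (2/β)^k (m−1/2)_k/(k! (m+1)_k), p_{m,k} = Σ_{j: 2j ≤ k} τ_{2j} P_{m,k−2j}, and q_{m,0} = ln(2/β) + ψ(m−1/2) − ψ(1) − ψ(m+1), where ψ = Γ'/Γ is the digamma function. Define F^{(R)}(η,β) = Σ_{j=0}^{m−1} (−1)^j ((−1/2)_j/j!) (2/β)^{j−1/2} F_{m−j−1}(η), and F^{(S)}(η,β) = (√π/2) (2/β)^{m−1/2} (−1)^m Σ_{n=1}^∞ (−1)^n e^{−nη − 2n/β} U(3/2, m+1, 2n/β), where U(3/2, m+1, z) = (1/Γ(3/2)) ∫_0^∞ e^{−zt} t^{1/2} (1+t)^{m−3/2} dt. Then for every integer N ≥ 1, as η → +∞, F_q(η,β) − F^{(R)}(η,β) − F^{(S)}(η,β) − Γ(m−1/2) (2/β)^{m−1/2} A_m ( −(γ + ln η) p_{m,0} + q_{m,0}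 + Σ_{k=1}^{N−1} (−1)^k p_{m,k} (k−1)! η^{−k} ) = O(η^{−N}), where γ is Euler's constant. -/
open Real MeasureTheory Set Finset Filter Asymptotics

/-- The relativistic Fermi-Dirac integral. -/
noncomputable def Frel (q η β : ℝ) : ℝ :=
  ∫ x in Ioi (0 : ℝ), x ^ q * Real.sqrt (1 + β * x / 2) / (Real.exp (x - η) + 1)

/-- The standard Fermi-Dirac integral. -/
noncomputable def Fstd (q η : ℝ) : ℝ :=
  ∫ x in Ioi (0 : ℝ), x ^ q / (Real.exp (x - η) + 1)

/-- The coefficients `τ_{2j}`: `τ_0 = 1` and `τ_{2j} = 2(1 − 2^{1−2j}) ζ(2j)` for `j ≥ 1`. -/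
noncomputable def tau2 (j : ℕ) : ℂ :=
  if j = 0 then 1 else 2 * (1 - (2 : ℂ) ^ (1 - 2 * (j : ℤ))) * riemannZeta (2 * j)

/-- `A_m = (−1)^{m+1}/(m! Γ(−1/2))`. -/
noncomputable def Acoef (m : ℕ) : ℝ :=
  (-1 : ℝ) ^ (m + 1) / (m.factorial * Real.Gamma (-1 / 2))

/-- `P_{m,k} = (2/β)^k (m−1/2)_k/(k! (m+1)_k)`. -/
noncomputable def Pcoef (m k : ℕ) (β : ℝ) : ℝ :=
  (2 / β) ^ k * (ascPochhammer ℝ k).eval ((m : ℝ) - 1 / 2) /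
    (k.factorial * (ascPochhammer ℝ k).eval ((m : ℝ) + 1))

/-- `p_{m,k} = Σ_{j : 2j ≤ k} τ_{2j} P_{m,k−2j}`. -/
noncomputable def pcoef (m k : ℕ) (β : ℝ) : ℂ :=
  ∑ j ∈ Finset.range (k / 2 + 1), tau2 j * ((Pcoef m (k - 2 * j) β : ℝ) : ℂ)

/-- The digamma function `ψ = Γ'/Γ`. -/
noncomputable def digamma (x : ℝ) : ℝ := deriv Real.Gamma x / Real.Gamma x

/-- `q_{m,0} = ln(2/β) + ψ(m−1/2) − ψ(1) − ψ(m+1)`. -/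
noncomputable def q0coef (m : ℕ) (β : ℝ) : ℝ :=
  Real.log (2 / β) + digamma ((m : ℝ) - 1 / 2) - digamma 1 - digamma ((m : ℝ) + 1)

/-- `F^{(R)}(η,β)`. -/
noncomputable def FR (m : ℕ) (β η : ℝ) : ℝ :=
  ∑ j ∈ Finset.range m, (-1 : ℝ) ^ j *
    ((ascPochhammer ℝ j).eval (-1 / 2 : ℝ) / j.factorial) *
      (2 / β) ^ ((j : ℝ) - 1 / 2) * Fstd ((m : ℝ) - j - 1) η

/-- `U(3/2, m+1, z)` defined by its integral representation. -/
noncomputable def Ubig (m : ℕ) (z : ℝ) : ℝ :=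
  (1 / Real.Gamma (3 / 2)) *
    ∫ t in Ioi (0 : ℝ), Real.exp (-z * t) * t ^ ((1 : ℝ) / 2) * (1 + t) ^ ((m : ℝ) - 3 / 2)

/-- `F^{(S)}(η,β)` (the series starts at `n = 1`, here re-indexed by `n + 1`). -/
noncomputable def FS (m : ℕ) (β η : ℝ) : ℝ :=
  (Real.sqrt π / 2) * (2 / β) ^ ((m : ℝ) - 1 / 2) * (-1 : ℝ) ^ m *
    ∑' n : ℕ, (-1 : ℝ) ^ (n + 1) *
      Real.exp (-((n : ℝ) + 1) * η - 2 * ((n : ℝ) + 1) / β) * Ubig m (2 * ((n : ℝ) + 1) / β)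


noncomputable def bc (α : ℝ) : ℕ → ℝ
  | 0 => 1
  | j + 1 => bc α j * (α - j) / (j + 1)

lemma bc_shift (α : ℝ) (j : ℕ) : ((j : ℝ) + 1) * bc α (j + 1) = α * bc (α - 1) j := by
  induction j with
  | zero => simp [bc]
  | succ j ih =>
    have h1 : ((j : ℝ) + 1) ≠ 0 := by positivity
    have h2 : ((j : ℝ) + 1 + 1) ≠ 0 := by positivity
    rw [bc.eq_2 α (j + 1), bc.eq_2 (α - 1) j]
    push_cast
    rw [mul_div_cancel₀ _ h2]
    have e : α * (bc (α - 1) j * (α - 1 - j) / (j + 1)) = (α * bc (α - 1) j) * (α - 1 - j) / (j + 1) := by ring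
    rw [e, ← ih]
    field_simp
    ring

lemma binom_bound (n : ℕ) : ∀ (α V : ℝ), 0 ≤ V → ∃ C : ℝ, 0 ≤ C ∧ ∀ v ∈ Icc (-1 / 2 : ℝ) V,
    |(1 + v) ^ α - ∑ j ∈ Finset.range n, bc α j * v ^ j| ≤ C * |v| ^ n := by
  induction n with
  | zero =>
    intro α V hV
    have hc : ContinuousOn (fun v : ℝ => (1 + v) ^ α) (Icc (-1 / 2 : ℝ) V) := by
      apply ContinuousOn.rpow_const (by fun_prop)
      intro x hx
      left
      have := hx.1
      intro h; linarith
    obtain ⟨C, hC⟩ := isCompact_Icc.exists_bound_of_continuousOn hc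
    refine ⟨max C 0, le_max_right _ _, fun v hv => ?_⟩
    have := hC v hv
    rw [Real.norm_eq_abs] at this
    simp only [Finset.range_zero, Finset.sum_empty, sub_zero, pow_zero, mul_one]
    exact this.trans (le_max_left _ _)
  | succ n ih =>
    intro α V hV
    obtain ⟨C, hC0, hC⟩ := ih (α - 1) V hV
    refine ⟨|α| * C, by positivity, fun v hv => ?_⟩
    set h : ℝ → ℝ := fun v => (1 + v) ^ α - ∑ j ∈ Finset.range (n + 1), bc α j * v ^ j with hh
    have hd : ∀ w ∈ Icc (-1 / 2 : ℝ) V, HasDerivAt h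
        (α * ((1 + w) ^ (α - 1) - ∑ j ∈ Finset.range n, bc (α - 1) j * w ^ j)) w := by
      intro w hw
      have e1 : HasDerivAt (fun v : ℝ => (1 + v) ^ α) (1 * α * (1 + w) ^ (α - 1)) w := by
        apply HasDerivAt.rpow_const ((hasDerivAt_id w).const_add 1)
        left; have := hw.1; intro h; simp at h; linarith
      have e2 : HasDerivAt (fun v : ℝ => ∑ j ∈ Finset.range (n + 1), bc α j * v ^ j)
          (∑ j ∈ Finset.range (n + 1), bc α j * (j * w ^ (j - 1))) w := by
        apply HasDerivAt.fun_sum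
        intro j _
        exact (hasDerivAt_pow j w).const_mul _
      refine (e1.sub e2).congr_deriv (Eq.symm ?_)
      rw [Finset.sum_range_succ', mul_sub, Finset.mul_sum]
      simp only [Nat.cast_add, Nat.cast_one, add_tsub_cancel_right, Nat.cast_zero, zero_mul, mul_zero, add_zero, one_mul]
      congr 1
      apply Finset.sum_congr rfl
      intro j _
      have := bc_shift α j
      rw [← mul_assoc, ← this]; ring
    have h0 : h 0 = 0 := by
      simp only [hh]
      rw [Finset.sum_range_succ']
      simp [bc]
    have hz : (0:ℝ) ∈ Icc (-1 / 2 : ℝ) V := ⟨by norm_num, hV⟩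
    have hsub : Set.uIcc 0 v ⊆ Icc (-1 / 2 : ℝ) V := Set.uIcc_subset_Icc hz hv
    have key := (convex_uIcc (0:ℝ) v).norm_image_sub_le_of_norm_hasDerivWithin_le (f := h) (C := |α| * C * |v| ^ n)
      (f' := fun w => α * ((1 + w) ^ (α - 1) - ∑ j ∈ Finset.range n, bc (α - 1) j * w ^ j))
      (fun w hw => (hd w (hsub hw)).hasDerivWithinAt)
      (fun w hw => by
        rw [Real.norm_eq_abs, abs_mul, mul_assoc]
        apply mul_le_mul_of_nonneg_left _ (abs_nonneg _)
        refine (hC w (hsub hw)).trans ?_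
        apply mul_le_mul_of_nonneg_left _ hC0
        apply pow_le_pow_left₀ (abs_nonneg _)
        have := Set.abs_sub_left_of_mem_uIcc hw
        simpa using this) Set.left_mem_uIcc Set.right_mem_uIcc
    rw [h0, sub_zero, sub_zero, Real.norm_eq_abs, Real.norm_eq_abs] at key
    calc _ ≤ _ := key
      _ = _ := by ring

/-- coefficients -/
noncomputable def ac (c : ℝ) (j : ℕ) : ℝ := bc (1 / 2) j * c ^ ((j : ℝ) - 1 / 2)

lemma ac_succ {c : ℝ} (hc : 0 < c) (j : ℕ) : ((j : ℝ) + 1) * ac c (j + 1) = ac c j * c * (1 / 2 - j) := by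
  unfold ac
  rw [bc]
  have : c ^ (((j + 1 : ℕ) : ℝ) - 1 / 2) = c ^ ((j : ℝ) - 1 / 2) * c := by
    rw [← Real.rpow_add_one hc.ne']; congr 1; push_cast; ring
  rw [this]
  field_simp

/-- remainders -/
noncomputable def gf (c : ℝ) : ℕ → ℝ → ℝ
  | 0, x => x ^ (-3 / 2 : ℝ) * (1 + x / c) ^ (1 / 2 : ℝ)
  | m + 1, x => x * gf c m x - ac c m

lemma gf_formula (c : ℝ) (m : ℕ) {x : ℝ} (hx : 0 < x) : gf c m x =
    x ^ ((m : ℝ) - 3 / 2) * (1 + x / c) ^ (1 / 2 : ℝ) -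
      ∑ j ∈ Finset.range m, ac c j * x ^ ((m : ℝ) - j - 1) := by
  induction m with
  | zero => simp [gf]; left; norm_num
  | succ m ih =>
    rw [gf, ih, mul_sub, Finset.sum_range_succ, Finset.mul_sum]
    have h1 : x ^ (((m + 1 : ℕ) : ℝ) - 3 / 2) = x * x ^ ((m : ℝ) - 3 / 2) := by
      rw [mul_comm, ← Real.rpow_add_one hx.ne']; congr 1; push_cast; ring
    have h2 : ∀ j ∈ Finset.range m, x * (ac c j * x ^ ((m : ℝ) - j - 1)) =
       ac c j * x ^ (((m + 1 : ℕ) : ℝ) - j - 1) := by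
      intro j _
      have : x ^ (((m + 1 : ℕ) : ℝ) - j - 1) = x * x ^ ((m : ℝ) - j - 1) := by
        rw [mul_comm, ← Real.rpow_add_one hx.ne']; congr 1; push_cast; ring
      rw [this]; ring
    rw [Finset.sum_congr rfl h2, h1]
    have : ((m + 1 : ℕ) : ℝ) - m - 1 = 0 := by push_cast; ring
    rw [this, Real.rpow_zero]; ring

lemma gf_formula2 {c : ℝ} (hc : 0 < c) (m : ℕ) {x : ℝ} (hx : 0 < x) : gf c m x =
    c ^ (-1 / 2 : ℝ) * (x ^ m / x) * ((1 + c / x) ^ (1 / 2 : ℝ) -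
      ∑ j ∈ Finset.range m, bc (1 / 2) j * (c / x) ^ j) := by
  induction m with
  | zero =>
    simp only [gf, pow_zero, Finset.range_zero, Finset.sum_empty, sub_zero]
    have : 1 + x / c = (x / c) * (1 + c / x) := by field_simp; ring
    rw [this, Real.mul_rpow (by positivity) (by positivity), Real.div_rpow hx.le hc.le]
    have h1 : x ^ (-3 / 2 : ℝ) = x ^ (-1 : ℝ) / x ^ (1/2 : ℝ) := by
      rw [← Real.rpow_sub hx]; norm_num
    have h2 : c ^ (-1 / 2 : ℝ) = 1 / c ^ (1/2 : ℝ) := by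
      rw [one_div, ← Real.rpow_neg hc.le]; norm_num
    rw [h1, h2, Real.rpow_neg_one]
    have := Real.rpow_pos_of_pos hx (1/2)
    have := Real.rpow_pos_of_pos hc (1/2)
    field_simp
  | succ m ih =>
    rw [gf, ih, Finset.sum_range_succ, ac]
    have : c ^ ((m : ℝ) - 1 / 2) = c ^ (-1 / 2 : ℝ) * c ^ m := by
      rw [← Real.rpow_natCast c m, ← Real.rpow_add hc]; congr 1; ring
    rw [this, div_pow c x m]
    generalize ∑ j ∈ Finset.range m, bc (1 / 2) j * (c / x) ^ j = S
    generalize (1 + c / x) ^ (1 / 2 : ℝ) = S'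
    field_simp
    ring

lemma gf_bound {c : ℝ} (hc : 0 < c) (m : ℕ) : ∃ C : ℝ, 0 ≤ C ∧ ∀ x : ℝ, 1 ≤ x → |gf c m x| ≤ C / x := by
  obtain ⟨C, hC0, hC⟩ := binom_bound m (1/2) c hc.le
  refine ⟨c ^ (-1 / 2 : ℝ) * (C * c ^ m), by positivity, fun x hx => ?_⟩
  have hx0 : 0 < x := by linarith
  rw [gf_formula2 hc m hx0, abs_mul, abs_of_nonneg (by positivity : 0 ≤ c ^ (-1 / 2 : ℝ) * (x ^ m / x))]
  have h1 := hC (c / x) ⟨by have : 0 < c / x := by positivity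
                            linarith, div_le_self hc.le hx⟩
  rw [abs_of_pos (by positivity : 0 < c / x)] at h1
  calc _ ≤ c ^ (-1 / 2 : ℝ) * (x ^ m / x) * (C * (c / x) ^ m) := by gcongr
    _ = _ := by rw [div_pow]; field_simp

lemma gf_iter (c : ℝ) (m M : ℕ) {x : ℝ} (hx : 0 < x) : gf c m x =
    ∑ i ∈ Finset.range M, ac c (m + i) * (x ^ (i + 1))⁻¹ + (x ^ M)⁻¹ * gf c (m + M) x := by
  induction M with
  | zero => simp
  | succ M ih =>
    rw [ih, Finset.sum_range_succ, ← add_assoc m M 1, gf]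
    field_simp
    ring

lemma gf_deriv {c : ℝ} (hc : 0 < c) (m : ℕ) {x : ℝ} (hx : 0 < x) : HasDerivAt (gf c m)
    (((((m : ℝ) - 1) * x + ((m : ℝ) - 3 / 2) * c) * gf c m x - m * ac c m) / (x * (x + c))) x := by
  induction m with
  | zero =>
    have e1 : HasDerivAt (fun x : ℝ => x ^ (-3 / 2 : ℝ)) ((-3/2) * x ^ ((-3/2 : ℝ) - 1)) x :=
      Real.hasDerivAt_rpow_const (Or.inl hx.ne')
    have e2 : HasDerivAt (fun x : ℝ => (1 + x / c) ^ (1/2 : ℝ)) ((1 / c) * (1/2) * (1 + x / c) ^ ((1/2 : ℝ) - 1)) x := by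
      apply HasDerivAt.rpow_const (((hasDerivAt_id x).div_const c).const_add 1)
      left; simp only [id]; positivity
    have e := e1.mul e2
    have : gf c 0 = (fun x : ℝ => x ^ (-3 / 2 : ℝ)) * (fun x : ℝ => (1 + x / c) ^ (1/2 : ℝ)) := by
      funext y; simp [gf]
    rw [this]
    refine e.congr_deriv (Eq.symm ?_)
    rw [Real.rpow_sub_one hx.ne', Real.rpow_sub_one (by positivity)]
    simp only [Pi.mul_apply]
    have : (0:ℝ) < 1 + x / c := by positivity
    push_cast
    field_simp
    ring
  | succ m ih =>
    have e := ((hasDerivAt_id x).mul ih).sub_const (ac c m)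
    have : gf c (m + 1) = fun x => ((id : ℝ → ℝ) * gf c m) x - ac c m := by
      funext y; simp [gf]
    have h2 := ac_succ hc m
    rw [this]
    refine e.congr_deriv (Eq.symm ?_)
    simp only [Pi.mul_apply, id]
    push_cast
    rw [h2]
    field_simp
    ring


lemma gf_cont {c : ℝ} (hc : 0 < c) (m : ℕ) : ContinuousOn (gf c (m + 2)) (Ici 0) := by
  induction m with
  | zero =>
    have h : ContinuousOn (fun x : ℝ => x ^ (1/2 : ℝ) * (1 + x / c) ^ (1/2 : ℝ) - x * ac c 0 - ac c 1) (Ici 0) := by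
      apply Continuous.continuousOn
      have h1 : Continuous (fun x : ℝ => x ^ (1/2 : ℝ)) := continuous_id.rpow_const (fun _ => Or.inr (by norm_num))
      have h2 : Continuous (fun x : ℝ => (1 + x / c) ^ (1/2 : ℝ)) :=
        Continuous.rpow_const (by fun_prop) (fun _ => Or.inr (by norm_num))
      fun_prop
    refine h.congr ?_
    intro x hx
    simp only [gf]
    rcases eq_or_lt_of_le (show (0:ℝ) ≤ x from hx) with h0 | h0
    · rw [← h0]; simp
    · have : x ^ (1/2 : ℝ) = x * (x * x ^ (-3/2 : ℝ)) := by
        rw [← mul_assoc, ← pow_two, ← Real.rpow_natCast, ← Real.rpow_add h0]; norm_num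
      rw [this]; ring
  | succ m ih =>
    have : gf c (m + 1 + 2) = fun x => x * gf c (m + 2) x - ac c (m + 2) := by
      funext x; rfl
    rw [this]
    exact (continuousOn_id.mul ih).sub continuousOn_const

lemma gf_zero (c : ℝ) (m : ℕ) : gf c (m + 1) 0 = - ac c m := by simp [gf]

lemma gf_tendsto {c : ℝ} (hc : 0 < c) (m : ℕ) : Tendsto (gf c m) atTop (nhds 0) := by
  obtain ⟨C, hC0, hC⟩ := gf_bound hc m
  apply squeeze_zero_norm' (a := fun x => C / x)
  · filter_upwards [eventually_ge_atTop 1] with x hx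
    exact hC x hx
  · exact tendsto_const_nhds.div_atTop tendsto_id

lemma digamma_add_one {x : ℝ} (hx : 0 < x) : digamma (x + 1) = digamma x + 1 / x := by
  have hd : DifferentiableAt ℝ Real.Gamma x :=
    Real.differentiableAt_Gamma fun m => ((neg_nonpos.mpr m.cast_nonneg).trans_lt hx).ne'
  have hG : 0 < Real.Gamma x := Real.Gamma_pos_of_pos hx
  have e1 : HasDerivAt (fun y => y * Real.Gamma y) (1 * Real.Gamma x + x * deriv Real.Gamma x) x :=
    (hasDerivAt_id x).mul hd.hasDerivAt
  have e2 : (fun y => Real.Gamma (y + 1)) =ᶠ[nhds x] (fun y => y * Real.Gamma y) := by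
    filter_upwards [lt_mem_nhds hx] with y hy
    exact Real.Gamma_add_one hy.ne'
  have e3 : deriv Real.Gamma (x + 1) = 1 * Real.Gamma x + x * deriv Real.Gamma x := by
    rw [← deriv_comp_add_const, e2.deriv_eq, e1.deriv]
  unfold digamma
  rw [e3, Real.Gamma_add_one hx.ne']
  field_simp
  ring

lemma digamma_half : digamma (1 / 2) = -(Real.eulerMascheroniConstant + 2 * Real.log 2) := by
  unfold digamma
  rw [Real.hasDerivAt_Gamma_one_half.deriv, Real.Gamma_one_half_eq]
  have : 0 < √π := Real.sqrt_pos.mpr Real.pi_pos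
  field_simp

lemma digamma_one : digamma 1 = -Real.eulerMascheroniConstant := by
  unfold digamma
  rw [Real.hasDerivAt_Gamma_one.deriv, Real.Gamma_one, div_one]

noncomputable def lam (c : ℝ) (m : ℕ) : ℝ :=
  - Real.log c - digamma ((m : ℝ) - 1 / 2) + digamma ((m : ℝ) + 1)

lemma lam_one (c : ℝ) : lam c 1 = - Real.log c + 2 * Real.log 2 + 1 := by
  unfold lam
  rw [digamma_add_one (by norm_num)]
  push_cast
  rw [digamma_one]
  norm_num
  rw [digamma_half]; ring

lemma lam_succ (c : ℝ) (m : ℕ) (hm : 1 ≤ m) : lam c (m + 1) = lam c m + 1 / ((m : ℝ) + 1) - 1 / ((m : ℝ) - 1 / 2) := by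
  have hm' : (1 : ℝ) ≤ m := by exact_mod_cast hm
  unfold lam
  have h1 := digamma_add_one (x := (m : ℝ) + 1) (by positivity)
  have h2 := digamma_add_one (x := (m : ℝ) - 1 / 2) (by linarith)
  have e : ((m + 1 : ℕ) : ℝ) - 1 / 2 = (m : ℝ) - 1 / 2 + 1 := by push_cast; ring
  rw [e, h2]; push_cast; rw [h1]; ring

lemma exists_Phi {c : ℝ} (hc : 0 < c) (m : ℕ) (hm : 1 ≤ m) : ∃ Φ : ℝ → ℝ, ContinuousOn Φ (Ici 0) ∧
    Φ 0 = 0 ∧ (∀ x : ℝ, 0 < x → HasDerivAt Φ (gf c m x) x) ∧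
    Tendsto (fun X => Φ X - ac c m * Real.log X) atTop (nhds (ac c m * lam c m)) := by
  induction m, hm using Nat.le_induction with
  | base =>
    have hsc : 0 < √c := Real.sqrt_pos.mpr hc
    have hcs : √c * √c = c := Real.mul_self_sqrt hc.le
    have hcs' : √c ^ 2 = c := Real.sq_sqrt hc.le
    have ha0 : ac c 0 = 1 / √c := by
      simp only [ac, bc, one_mul]
      rw [Real.sqrt_eq_rpow, one_div (c ^ (1/2:ℝ)), ← Real.rpow_neg hc.le]; norm_num
    have ha : ac c 1 = √c / 2 := by
      simp only [ac, bc]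
      rw [Real.sqrt_eq_rpow]; norm_num; ring
    refine ⟨fun x => √x * √(1 + x / c) + √c * Real.arsinh (√x / √c) - x / √c, ?_, by simp, ?_, ?_⟩
    · apply Continuous.continuousOn
      have := Real.continuous_arsinh
      fun_prop
    · intro x hx
      have hsx : 0 < √x := Real.sqrt_pos.mpr hx
      have h1c : 0 < 1 + x / c := by positivity
      have hs1 : 0 < √(1 + x / c) := Real.sqrt_pos.mpr h1c
      have e1 : HasDerivAt (fun x : ℝ => √x) (1 / (2 * √x)) x := Real.hasDerivAt_sqrt hx.ne'
      have e2 : HasDerivAt (fun x : ℝ => √(1 + x / c)) ((1 / c) / (2 * √(1 + x / c))) x :=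
        (((hasDerivAt_id x).div_const c).const_add 1).sqrt h1c.ne'
      have e3 := ((Real.hasDerivAt_arsinh (√x / √c)).comp x (e1.div_const (√c))).const_mul (√c)
      have e4 := (hasDerivAt_id x).div_const (√c)
      have e := ((e1.mul e2).add e3).sub e4
      have hq : 1 + (√x / √c) ^ 2 = 1 + x / c := by
        rw [div_pow, Real.sq_sqrt hx.le, hcs']
      rw [hq] at e
      refine e.congr_deriv (Eq.symm ?_)
      simp only [gf, ha0]
      have h32 : x * (x ^ (-3/2 : ℝ) * (1 + x / c) ^ (1/2 : ℝ)) = √(1 + x / c) / √x := by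
        rw [Real.sqrt_eq_rpow, Real.sqrt_eq_rpow, ← mul_assoc, mul_comm x, ← Real.rpow_add_one hx.ne']
        have : x ^ ((-3/2 : ℝ) + 1) = (x ^ (1/2 : ℝ))⁻¹ := by
          rw [← Real.rpow_neg hx.le]; norm_num
        rw [this]; ring
      rw [h32]
      have k1 : √(1 + x / c) ^ 2 = 1 + x / c := Real.sq_sqrt h1c.le
      have k2 : √x ^ 2 = x := Real.sq_sqrt hx.le
      generalize √(1 + x / c) = A at *
      generalize √x = B at *
      subst k2
      have k1' : c * A ^ 2 = c + B ^ 2 := by rw [k1]; field_simp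
      field_simp
      nlinarith [k1']
    · set E : ℝ → ℝ := fun y => 1 / (√(1 / c + y) + √(1 / c)) + √c * Real.log (√(1 / c) + √(1 / c + y)) with hE
      have hi : 0 < √(1 / c) := Real.sqrt_pos.mpr (by positivity)
      have hEc : ContinuousAt E 0 := by
        have h0 : √(1 / c + 0) + √(1 / c) ≠ 0 := by positivity
        have h1 : √(1 / c) + √(1 / c + 0) ≠ 0 := by positivity
        simp only [hE]
        apply ContinuousAt.add
        · exact ContinuousAt.div (by fun_prop) (by fun_prop) h0
        · exact ContinuousAt.mul (by fun_prop) (ContinuousAt.log (by fun_prop) h1)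
      have hE0 : E 0 = ac c 1 * lam c 1 := by
        simp only [hE, add_zero]
        rw [lam_one, ha]
        have : √(1 / c) = 1 / √c := by rw [Real.sqrt_div zero_le_one, Real.sqrt_one]
        rw [this]
        have h2 : 1 / √c + 1 / √c = 2 / √c := by ring
        rw [h2, Real.log_div (by norm_num) hsc.ne', Real.log_sqrt hc.le]
        field_simp
        ring
      rw [← hE0]
      have ht : Tendsto (fun X : ℝ => E X⁻¹) atTop (nhds (E 0)) := hEc.tendsto.comp tendsto_inv_atTop_zero
      refine ht.congr' ?_
      filter_upwards [eventually_gt_atTop 0] with X hX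
      have hsx : 0 < √X := Real.sqrt_pos.mpr hX
      have k2 : √X ^ 2 = X := Real.sq_sqrt hX.le
      have i1 : √(1 / c + X⁻¹) = √(1 + X / c) / √X := by
        rw [← Real.sqrt_div' _ hX.le]; congr 1; field_simp; ring
      have i2 : √(1 / c) = 1 / √c := by rw [Real.sqrt_div zero_le_one, Real.sqrt_one]
      have hq : 1 + (√X / √c) ^ 2 = 1 + X / c := by
        rw [div_pow, k2, hcs']
      have h1c : 0 < 1 + X / c := by positivity
      have hs1 : 0 < √(1 + X / c) := Real.sqrt_pos.mpr h1c
      have k1 : √(1 + X / c) ^ 2 = 1 + X / c := Real.sq_sqrt h1c.le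
      simp only [hE]
      rw [ha, Real.arsinh, hq, i1, i2]
      have l1 : Real.log (1 / √c + √(1 + X / c) / √X) = Real.log (√X / √c + √(1 + X / c)) - Real.log X / 2 := by
        rw [← Real.log_sqrt hX.le, ← Real.log_div (by positivity) hsx.ne']
        congr 1; field_simp
      rw [l1]
      have l2 : 1 / (√(1 + X / c) / √X + 1 / √c) = √X * √(1 + X / c) - X / √c := by
        generalize √(1 + X / c) = A at *
        generalize √X = B at *
        generalize √c = s at *
        subst k2
        subst hcs'
        have k1' : s ^ 2 * A ^ 2 = s ^ 2 + B ^ 2 := by rw [k1]; field_simp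
        rw [eq_comm, eq_div_iff (by positivity)]
        field_simp
        nlinarith [k1']
      rw [l2]; ring
  | succ m hm ih =>
    obtain ⟨Φ, h1, h2, h3, h4⟩ := ih
    have hm' : (1 : ℝ) ≤ m := by exact_mod_cast hm
    obtain ⟨n, rfl⟩ : ∃ n, m = n + 1 := ⟨m - 1, by omega⟩
    set m := n + 1 with hmn
    set t : ℝ → ℝ := fun x => gf c (m + 1) x + gf c (m + 2) x / c with ht
    have hac := ac_succ hc m
    refine ⟨fun x => (c / (m + 1)) * (t x - t 0 - (m - 1 / 2) * Φ x), ?_, ?_, ?_, ?_⟩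
    · have e1 := gf_cont hc n
      have e2 := gf_cont hc (n + 1)
      have : ContinuousOn t (Ici 0) := e1.add (e2.div_const c)
      exact continuousOn_const.mul ((this.sub continuousOn_const).sub (continuousOn_const.mul h1))
    · simp [h2]
    · intro x hx
      have e1 := gf_deriv hc (m + 1) hx
      have e2 := ((hasDerivAt_id x).mul e1).sub_const (ac c (m + 1))
      have e3 : HasDerivAt t _ x := e1.add (e2.div_const c)
      have e := ((e3.sub_const (t 0)).sub ((h3 x hx).const_mul ((m : ℝ) - 1 / 2))).const_mul (c / ((m : ℝ) + 1))
      refine e.congr_deriv (Eq.symm ?_)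
      have hg : gf c m x = (gf c (m + 1) x + ac c m) / x := by
        simp only [gf]; field_simp; ring
      rw [hg]
      have hac' : ac c (m + 1) = ac c m * c * (1 / 2 - m) / (m + 1) := by rw [← hac]; field_simp
      generalize gf c (m + 1) x = G at *
      simp only [id]
      rw [hac']
      push_cast
      field_simp
      ring
    · have tt : Tendsto t atTop (nhds (0 + 0 / c)) := (gf_tendsto hc _).add ((gf_tendsto hc _).div_const c)
      have e := ((tt.sub_const (t 0)).sub (h4.const_mul ((m : ℝ) - 1 / 2))).const_mul (c / ((m : ℝ) + 1))
      have hac' : ac c (m + 1) = ac c m * c * (1 / 2 - m) / (m + 1) := by rw [← hac]; field_simp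
      have ht0 : t 0 = - ac c m - ac c (m + 1) / c := by
        simp only [ht]; rw [gf_zero, gf_zero]; ring
      have hm2 : (m : ℝ) - 1 / 2 ≠ 0 := by intro h; linarith
      refine (e.congr ?_).trans (le_of_eq ?_)
      · intro X
        rw [hac']; field_simp; ring
      · congr 1
        rw [lam_succ c m hm, ht0, hac']
        have hm3 : (m : ℝ) * 2 - 1 ≠ 0 := by intro h; linarith
        field_simp
        ring


noncomputable def sg (t : ℝ) : ℝ := 1 / (Real.exp t + 1)

lemma sg_pos (t : ℝ) : 0 < sg t := by unfold sg; positivity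
lemma sg_le_one (t : ℝ) : sg t ≤ 1 := by
  unfold sg; rw [div_le_one (by positivity)]; linarith [Real.exp_pos t]
lemma sg_le_exp (t : ℝ) : sg t ≤ Real.exp (-t) := by
  unfold sg; rw [Real.exp_neg, one_div]
  exact inv_anti₀ (Real.exp_pos t) (by linarith)
lemma sg_neg (t : ℝ) : sg (-t) = 1 - sg t := by
  unfold sg; rw [Real.exp_neg]
  have := Real.exp_pos t
  field_simp; ring
lemma sg_cont : Continuous sg := by
  unfold sg
  apply Continuous.div continuous_const (by fun_prop)
  intro x; positivity

lemma int_poly_exp (n : ℕ) {b : ℝ} (hb : 0 < b) :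
    IntegrableOn (fun x : ℝ => (1 + x) ^ n * Real.exp (-b * x)) (Ioi 0) := by
  apply integrable_of_isBigO_exp_neg (b := b / 2) (by positivity)
  · apply Continuous.continuousOn; fun_prop
  · have h1 : (fun x : ℝ => (1 + x) ^ n) =O[atTop] (fun x : ℝ => Real.exp (b / 2 * x)) := by
      have h2 : (fun x : ℝ => (1 + x) ^ n) =O[atTop] (fun x : ℝ => x ^ n) := by
        apply IsBigO.of_bound (2 ^ n)
        filter_upwards [eventually_ge_atTop 1] with x hx
        rw [Real.norm_eq_abs, Real.norm_eq_abs, abs_of_nonneg (by positivity), abs_of_nonneg (by positivity), ← mul_pow]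
        gcongr; linarith
      exact h2.trans (isLittleO_pow_exp_pos_mul_atTop n (by positivity)).isBigO
    have h3 := h1.mul (isBigO_refl (fun x : ℝ => Real.exp (-b * x)) atTop)
    refine h3.congr_right ?_
    intro x; rw [← Real.exp_add]; congr 1; ring

lemma int_sg {w : ℝ → ℝ} (hw : AEStronglyMeasurable w (volume.restrict (Ioi 0))) {C : ℝ} {n : ℕ}
    (hb : ∀ t : ℝ, 0 < t → |w t| ≤ C * (1 + t) ^ n) (η : ℝ) :
    IntegrableOn (fun t => w t * sg (t - η)) (Ioi 0) := by
  have h := ((int_poly_exp n one_pos).const_mul (C * Real.exp η))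
  refine Integrable.mono' h (hw.mul (by
    apply Continuous.aestronglyMeasurable
    exact sg_cont.comp (by fun_prop))) ?_
  filter_upwards [ae_restrict_mem measurableSet_Ioi] with t ht
  rw [norm_mul, Real.norm_eq_abs, Real.norm_eq_abs, abs_of_pos (sg_pos _)]
  have h1 := hb t ht
  have h2 := sg_le_exp (t - η)
  have h3 : Real.exp (-(t - η)) = Real.exp η * Real.exp (-1 * t) := by
    rw [← Real.exp_add]; congr 1; ring
  rw [h3] at h2
  calc _ ≤ (C * (1 + t) ^ n) * (Real.exp η * Real.exp (-1 * t)) :=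
        mul_le_mul h1 h2 (sg_pos _).le ((abs_nonneg _).trans h1)
    _ = _ := by ring

noncomputable def Mom (l : ℕ) : ℝ := ∫ t in Ioi (0:ℝ), t ^ l * sg t

noncomputable def tauR (j : ℕ) : ℝ := if j = 0 then 1 else 2 * Mom (2 * j - 1) / ((2 * j - 1).factorial : ℝ)

lemma tau2_eq (j : ℕ) : tau2 j = ((tauR j : ℝ) : ℂ) := by
  unfold tau2 tauR
  split_ifs with hj
  · simp
  obtain ⟨i, rfl⟩ : ∃ i, j = i + 1 := ⟨j - 1, by omega⟩
  have hk : 2 * (i + 1) - 1 = 2 * i + 1 := by omega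
  rw [hk]
  set s : ℂ := ((2 * i + 2 : ℕ) : ℂ) with hs
  have hsre : s.re = ((2 * i + 2 : ℕ) : ℝ) := by rw [hs, Complex.natCast_re]
  have hs1 : 1 < s.re := by rw [hsre]; norm_cast; omega
  have hs2 : (2 * ((i + 1 : ℕ) : ℂ)) = s := by rw [hs]; push_cast; ring
  rw [hs2]
  set f : ℕ → ℂ := fun n => 1 / ((n : ℂ) + 1) ^ (2 * i + 2) with hf
  have hz : riemannZeta s = ∑' n, f n := by
    rw [zeta_eq_tsum_one_div_nat_add_one_cpow hs1]
    congr 1; funext n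
    rw [hs, Complex.cpow_natCast]
  have hsumR : Summable (fun n : ℕ => 1 / ((n : ℝ) + 1) ^ (2 * i + 2)) := by
    have := (summable_nat_add_iff 1).mpr (Real.summable_one_div_nat_pow.mpr (show 1 < 2 * i + 2 by omega))
    simpa using this
  have hsum : Summable f := by
    have := Complex.hasSum_ofReal.mpr hsumR.hasSum
    refine this.summable.congr ?_
    intro n; simp [hf]
  have hfs : HasSum f (riemannZeta s) := by rw [hz]; exact hsum.hasSum
  have hodd : HasSum (fun k => f (2 * k + 1)) ((1 / 2 ^ (2 * i + 2)) * riemannZeta s) := by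
    refine (hfs.mul_left (1 / 2 ^ (2 * i + 2))).congr_fun ?_
    intro k
    simp only [hf]
    push_cast
    rw [one_div_mul_one_div, ← mul_pow]; congr 2; ring
  have heven : Summable (fun k => f (2 * k)) := hsum.comp_injective (fun a b h => by simpa using h)
  have hE : ∑' k, f (2 * k) = riemannZeta s - (1 / 2 ^ (2 * i + 2)) * riemannZeta s := by
    have := (heven.hasSum.even_add_odd hodd).unique hfs
    exact eq_sub_of_add_eq this
  have halt : HasSum (fun n => (-1 : ℂ) ^ n * f n) ((1 - 2 / 2 ^ (2 * i + 2)) * riemannZeta s) := by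
    have a1 : HasSum (fun k => (-1 : ℂ) ^ (2 * k) * f (2 * k)) (∑' k, f (2 * k)) := by
      simpa using heven.hasSum
    have a2 : HasSum (fun k => (-1 : ℂ) ^ (2 * k + 1) * f (2 * k + 1)) (-((1 / 2 ^ (2 * i + 2)) * riemannZeta s)) := by
      simpa [pow_succ, pow_mul] using hodd.neg
    have := a1.even_add_odd (f := fun n => (-1 : ℂ) ^ n * f n) a2
    convert this using 1
    rw [hE]; ring
  have hmel := hasSum_mellin (a := fun n : ℕ => (-1 : ℂ) ^ n) (p := fun n : ℕ => (n : ℝ) + 1)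
    (F := fun t => ((sg t : ℝ) : ℂ)) (s := s) (fun n => Or.inr (by positivity)) (by linarith)
    (by
      intro t ht
      have ht' : (0:ℝ) < t := ht
      have hr : ‖-Real.exp (-t)‖ < 1 := by
        rw [norm_neg, Real.norm_eq_abs, abs_of_pos (Real.exp_pos _)]
        exact Real.exp_lt_one_iff.mpr (by linarith)
      have g := (hasSum_geometric_of_norm_lt_one hr).mul_left (Real.exp (-t))
      have e : Real.exp (-t) * (1 - -Real.exp (-t))⁻¹ = sg t := by
        unfold sg; rw [Real.exp_neg, sub_neg_eq_add]; have := Real.exp_pos t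
        have h3 : Real.exp t + 1 ≠ 0 := by positivity
        have h4 : 1 + (Real.exp t)⁻¹ ≠ 0 := by positivity
        field_simp
      rw [e] at g
      refine (Complex.hasSum_ofReal.mpr g).congr_fun ?_
      intro n
      have : Real.exp (-((n : ℝ) + 1) * t) = Real.exp (-t) * Real.exp (-t) ^ n := by
        rw [← Real.exp_nat_mul, ← Real.exp_add]; congr 1; ring
      rw [this, neg_pow]; push_cast; ring)
    (by
      refine hsumR.congr ?_
      intro n
      rw [hsre, Real.rpow_natCast]; simp)
  have hmel2 : mellin (fun t => ((sg t : ℝ) : ℂ)) s = ((Mom (2 * i + 1) : ℝ) : ℂ) := by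
    unfold mellin Mom
    rw [← integral_complex_ofReal]
    apply setIntegral_congr_fun measurableSet_Ioi
    intro t ht
    simp only [smul_eq_mul]
    have : s - 1 = ((2 * i + 1 : ℕ) : ℂ) := by rw [hs]; push_cast; ring
    rw [this, Complex.cpow_natCast]; push_cast; ring
  have hG : Complex.Gamma s = ((2 * i + 1).factorial : ℂ) := by
    have : s = ((2 * i + 1 : ℕ) : ℂ) + 1 := by rw [hs]; push_cast; ring
    rw [this, Complex.Gamma_nat_eq_factorial]
  have hfin := (halt.mul_left (Complex.Gamma s)).unique (hmel.congr_fun (fun n => by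
    simp only [hf]
    rw [hs, Complex.cpow_natCast]; push_cast; ring))
  rw [hmel2, hG] at hfin
  push_cast
  rw [← hfin]
  have hne : ((2 * i + 1).factorial : ℂ) ≠ 0 := by exact_mod_cast Nat.factorial_ne_zero _
  have h2 : (2 : ℂ) ^ (1 - 2 * ((i : ℤ) + 1)) = 2 / 2 ^ (2 * i + 2) := by
    rw [zpow_sub₀ (by norm_num), zpow_one]
    have : (2 * ((i : ℤ) + 1)) = ((2 * i + 2 : ℕ) : ℤ) := by push_cast; ring
    rw [this, zpow_natCast]
  rw [h2]
  field_simp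


noncomputable def Dw (p : ℕ) (η t : ℝ) : ℝ :=
  ((η + t) ^ p)⁻¹ - (if t < η - 1 then ((η - t) ^ p)⁻¹ else 0)

noncomputable def dco (p l : ℕ) : ℝ := bc (-(p : ℝ)) l * (1 - (-1) ^ l)

lemma D_bound (p L : ℕ) : ∃ C : ℝ, 0 ≤ C ∧ ∀ η : ℝ, 2 < η → ∀ t : ℝ, 0 < t →
    |Dw p η t - ∑ l ∈ Finset.range L, dco p l * (η ^ (p + l))⁻¹ * t ^ l| ≤
      C * (η ^ (p + L))⁻¹ * (1 + t) ^ (p + L) := by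
  obtain ⟨C, hC0, hC⟩ := binom_bound L (-(p : ℝ)) (1 / 2) (by norm_num)
  set S : ℝ := ∑ l ∈ Finset.range L, |dco p l| with hS
  have hS0 : 0 ≤ S := Finset.sum_nonneg (fun _ _ => abs_nonneg _)
  refine ⟨2 * C + (2 + S) * 2 ^ (p + L), by positivity, fun η hη t ht => ?_⟩
  have hη0 : 0 < η := by linarith
  rcases le_or_gt t (η / 2) with h | h
  · have hlt : t < η - 1 := by linarith
    unfold Dw
    rw [if_pos hlt]
    set v := t / η with hv
    have hv0 : 0 < v := by positivity
    have hv1 : v ≤ 1 / 2 := by rw [hv, div_le_iff₀ hη0]; linarith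
    have hvt : t = η * v := by rw [hv]; field_simp
    have b1 := hC v ⟨by linarith, hv1⟩
    have b2 := hC (-v) ⟨by linarith, by linarith⟩
    have e1 : ((η + t) ^ p)⁻¹ = (η ^ p)⁻¹ * (1 + v) ^ (-(p : ℝ)) := by
      rw [Real.rpow_neg (by linarith), Real.rpow_natCast, ← mul_inv, ← mul_pow, hvt]; congr 2; ring
    have e2 : ((η - t) ^ p)⁻¹ = (η ^ p)⁻¹ * (1 + -v) ^ (-(p : ℝ)) := by
      rw [Real.rpow_neg (by linarith), Real.rpow_natCast, ← mul_inv, ← mul_pow, hvt]; congr 2; ring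
    have e3 : ∑ l ∈ Finset.range L, dco p l * (η ^ (p + l))⁻¹ * t ^ l =
        (η ^ p)⁻¹ * (∑ j ∈ Finset.range L, bc (-(p : ℝ)) j * v ^ j - ∑ j ∈ Finset.range L, bc (-(p : ℝ)) j * (-v) ^ j) := by
      rw [← Finset.sum_sub_distrib, Finset.mul_sum]
      apply Finset.sum_congr rfl
      intro l _
      rw [dco, hvt, neg_pow v, mul_pow, pow_add]
      field_simp
    rw [e1, e2, e3]
    rw [abs_neg] at b2
    rw [abs_of_pos hv0] at b1 b2
    generalize (1 + v) ^ (-(p : ℝ)) = A at *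
    generalize (1 + -v) ^ (-(p : ℝ)) = B at *
    generalize ∑ j ∈ Finset.range L, bc (-(p : ℝ)) j * v ^ j = A' at *
    generalize ∑ j ∈ Finset.range L, bc (-(p : ℝ)) j * (-v) ^ j = B' at *
    have e4 : (η ^ p)⁻¹ * A - (η ^ p)⁻¹ * B - (η ^ p)⁻¹ * (A' - B') = (η ^ p)⁻¹ * ((A - A') - (B - B')) := by ring
    rw [e4, abs_mul, abs_of_pos (by positivity : 0 < (η ^ p)⁻¹)]
    calc _ ≤ (η ^ p)⁻¹ * (2 * C * v ^ L) := by
          gcongr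
          exact (abs_sub _ _).trans (by linarith)
      _ = 2 * C * (η ^ (p + L))⁻¹ * t ^ L := by
          rw [hv, div_pow, pow_add]; field_simp
      _ ≤ (2 * C + (2 + S) * 2 ^ (p + L)) * (η ^ (p + L))⁻¹ * (1 + t) ^ (p + L) := by
          have : t ^ L ≤ (1 + t) ^ (p + L) := by
            calc t ^ L ≤ (1 + t) ^ L := by gcongr; linarith
              _ ≤ (1 + t) ^ (p + L) := pow_le_pow_right₀ (by linarith) (by omega)
          gcongr
          have : 0 ≤ (2 + S) * 2 ^ (p + L) := by positivity
          linarith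
  · have hv1 : 1 ≤ 2 * t / η := by rw [le_div_iff₀ hη0]; linarith
    have d1 : |Dw p η t| ≤ 2 := by
      unfold Dw
      have a1 : |((η + t) ^ p)⁻¹| ≤ 1 := by
        rw [abs_of_nonneg (by positivity)]
        exact inv_le_one_of_one_le₀ (one_le_pow₀ (by linarith))
      have a2 : |(if t < η - 1 then ((η - t) ^ p)⁻¹ else 0)| ≤ 1 := by
        split_ifs with hh
        · have : 1 ≤ η - t := by linarith
          rw [abs_of_nonneg (by positivity)]
          exact inv_le_one_of_one_le₀ (one_le_pow₀ this)
        · simp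
      exact (abs_sub _ _).trans (by linarith)
    have d2 : |∑ l ∈ Finset.range L, dco p l * (η ^ (p + l))⁻¹ * t ^ l| ≤ S * (2 * t / η) ^ (p + L) := by
      refine (Finset.abs_sum_le_sum_abs _ _).trans ?_
      rw [hS, Finset.sum_mul]
      apply Finset.sum_le_sum
      intro l hl
      have hl' : l < L := Finset.mem_range.mp hl
      rw [mul_assoc, abs_mul, abs_of_nonneg (by positivity : 0 ≤ (η ^ (p + l))⁻¹ * t ^ l)]
      gcongr
      calc (η ^ (p + l))⁻¹ * t ^ l = (η ^ p)⁻¹ * (t / η) ^ l := by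
            rw [div_pow, pow_add]; field_simp
        _ ≤ 1 * (2 * t / η) ^ l := by
            gcongr
            · exact inv_le_one_of_one_le₀ (one_le_pow₀ (by linarith))
            · linarith
        _ = (2 * t / η) ^ l := one_mul _
        _ ≤ (2 * t / η) ^ (p + L) := pow_le_pow_right₀ hv1 (by omega)
    calc _ ≤ 2 + S * (2 * t / η) ^ (p + L) := (abs_sub _ _).trans (by linarith)
      _ ≤ (2 + S) * (2 * t / η) ^ (p + L) := by
          have := one_le_pow₀ hv1 (n := p + L)
          linarith
      _ = (2 + S) * 2 ^ (p + L) * (η ^ (p + L))⁻¹ * t ^ (p + L) := by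
          rw [div_pow, mul_pow]; field_simp
      _ ≤ _ := by
          gcongr
          · linarith
          · linarith

lemma Dw_meas (p : ℕ) (η : ℝ) : Measurable (Dw p η) := by
  unfold Dw
  apply Measurable.sub (by fun_prop)
  apply Measurable.ite (measurableSet_lt (by fun_prop) (by fun_prop)) (by fun_prop) (by fun_prop)

lemma mom_int (l : ℕ) : IntegrableOn (fun t : ℝ => t ^ l * sg t) (Ioi 0) := by
  have := int_sg (w := fun t : ℝ => t ^ l) (by fun_prop) (C := 1) (n := l)
    (by intro t ht; rw [abs_of_nonneg (by positivity), one_mul]; gcongr; linarith) 0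
  simpa using this

lemma D_int (p L : ℕ) : ∃ C : ℝ, 0 ≤ C ∧ ∀ η : ℝ, 2 < η →
    IntegrableOn (fun t => Dw p η t * sg t) (Ioi 0) ∧
    |(∫ t in Ioi (0:ℝ), Dw p η t * sg t) - ∑ l ∈ Finset.range L, dco p l * Mom l * (η ^ (p + l))⁻¹| ≤
      C * (η ^ (p + L))⁻¹ := by
  obtain ⟨C, hC0, hC⟩ := D_bound p L
  have hI : IntegrableOn (fun t : ℝ => (1 + t) ^ (p + L) * sg t) (Ioi 0) := by
    have := int_sg (w := fun t : ℝ => (1 + t) ^ (p + L)) (by fun_prop) (C := 1) (n := p + L)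
      (by intro t ht; rw [abs_of_nonneg (by positivity), one_mul]) 0
    simpa using this
  have hI0 : 0 ≤ ∫ t in Ioi (0:ℝ), (1 + t) ^ (p + L) * sg t :=
    setIntegral_nonneg measurableSet_Ioi (fun t ht => by
      have ht' : (0:ℝ) < t := ht
      have := sg_pos t
      positivity)
  refine ⟨C * ∫ t in Ioi (0:ℝ), (1 + t) ^ (p + L) * sg t, by positivity, fun η hη => ?_⟩
  have hR : IntegrableOn (fun t : ℝ => (∑ l ∈ Finset.range L, dco p l * (η ^ (p + l))⁻¹ * t ^ l) * sg t) (Ioi 0) := by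
    simp_rw [Finset.sum_mul, mul_assoc _ _ (sg _)]
    apply integrable_finsetSum
    intro l _
    exact (mom_int l).const_mul _
  have hbd : ∀ t ∈ Ioi (0:ℝ), ‖(Dw p η t - ∑ l ∈ Finset.range L, dco p l * (η ^ (p + l))⁻¹ * t ^ l) * sg t‖ ≤
      C * (η ^ (p + L))⁻¹ * ((1 + t) ^ (p + L) * sg t) := by
    intro t ht
    rw [norm_mul, Real.norm_eq_abs, Real.norm_eq_abs, abs_of_pos (sg_pos t), ← mul_assoc]
    exact mul_le_mul_of_nonneg_right (hC η hη t ht) (sg_pos t).le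
  have hDR : IntegrableOn (fun t => (Dw p η t - ∑ l ∈ Finset.range L, dco p l * (η ^ (p + l))⁻¹ * t ^ l) * sg t) (Ioi 0) := by
    refine Integrable.mono' (hI.const_mul (C * (η ^ (p + L))⁻¹)) ?_ ?_
    · apply Measurable.aestronglyMeasurable
      have := Dw_meas p η
      have := sg_cont.measurable
      fun_prop
    · filter_upwards [ae_restrict_mem measurableSet_Ioi] with t ht using hbd t ht
  have hD : IntegrableOn (fun t => Dw p η t * sg t) (Ioi 0) := by
    refine (hDR.add hR).congr ?_
    filter_upwards with t
    simp only [Pi.add_apply]; ring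
  refine ⟨hD, ?_⟩
  have e : ∑ l ∈ Finset.range L, dco p l * Mom l * (η ^ (p + l))⁻¹ =
      ∫ t in Ioi (0:ℝ), (∑ l ∈ Finset.range L, dco p l * (η ^ (p + l))⁻¹ * t ^ l) * sg t := by
    simp_rw [Finset.sum_mul, mul_assoc _ _ (sg _)]
    rw [integral_finsetSum]
    · apply Finset.sum_congr rfl
      intro l _
      rw [integral_const_mul, Mom]; ring
    · intro l _
      exact (mom_int l).const_mul _
  rw [e, ← integral_sub hD hR, ← Real.norm_eq_abs]
  have e2 : ∀ t, Dw p η t * sg t - (∑ l ∈ Finset.range L, dco p l * (η ^ (p + l))⁻¹ * t ^ l) * sg t =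
    (Dw p η t - ∑ l ∈ Finset.range L, dco p l * (η ^ (p + l))⁻¹ * t ^ l) * sg t := fun t => by ring
  simp_rw [e2]
  refine (norm_integral_le_of_norm_le (hI.const_mul (C * (η ^ (p + L))⁻¹)) ?_).trans ?_
  · filter_upwards [ae_restrict_mem measurableSet_Ioi] with t ht using hbd t ht
  · rw [integral_const_mul]
    apply le_of_eq; ring

noncomputable def Jf (i : ℕ) (η : ℝ) : ℝ := ∫ x in Ioi (1:ℝ), (x ^ (i + 1))⁻¹ * sg (x - η)

lemma Jint (i : ℕ) (η : ℝ) : IntegrableOn (fun x => (x ^ (i + 1))⁻¹ * sg (x - η)) (Ioi 1) := by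
  have h := int_sg (w := fun _ => 1) (by fun_prop) (C := 1) (n := 0) (by intro t _; simp) η
  have h2 : IntegrableOn (fun x => 1 * sg (x - η)) (Ioi 1) := h.mono_set (Ioi_subset_Ioi zero_le_one)
  refine Integrable.mono' h2 ?_ ?_
  · apply Measurable.aestronglyMeasurable
    have := sg_cont.measurable
    fun_prop
  · filter_upwards [ae_restrict_mem measurableSet_Ioi] with x hx
    have hx' : (1:ℝ) < x := hx
    rw [norm_mul, Real.norm_eq_abs, Real.norm_eq_abs, abs_of_pos (sg_pos _), abs_of_nonneg (by positivity)]
    apply mul_le_mul_of_nonneg_right _ (sg_pos _).le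
    exact inv_le_one_of_one_le₀ (one_le_pow₀ hx'.le)

lemma J_eq (i : ℕ) {η : ℝ} (hη : 2 < η) : Jf i η =
    (∫ x in (1:ℝ)..η, (x ^ (i + 1))⁻¹) + ∫ t in Ioi (0:ℝ), Dw (i + 1) η t * sg t := by
  have hJ := Jint i η
  have hcont : ContinuousOn (fun x : ℝ => (x ^ (i + 1))⁻¹) (Set.uIcc 1 η) := by
    apply ContinuousOn.inv₀ (by fun_prop)
    intro x hx
    rw [Set.uIcc_of_le (by linarith)] at hx
    have := hx.1
    positivity
  have hsc : Continuous (fun x : ℝ => sg (η - x)) := sg_cont.comp (by fun_prop)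
  -- split
  have s1 : Jf i η = (∫ x in (1:ℝ)..η, (x ^ (i + 1))⁻¹ * sg (x - η)) +
      ∫ x in Ioi η, (x ^ (i + 1))⁻¹ * sg (x - η) := by
    unfold Jf
    rw [intervalIntegral.integral_of_le (by linarith), ← setIntegral_union _ measurableSet_Ioi
      (hJ.mono_set Ioc_subset_Ioi_self) (hJ.mono_set (Ioi_subset_Ioi (by linarith))),
      Ioc_union_Ioi_eq_Ioi (by linarith)]
    exact Ioc_disjoint_Ioi le_rfl
  have s2 : (∫ x in (1:ℝ)..η, (x ^ (i + 1))⁻¹ * sg (x - η)) = (∫ x in (1:ℝ)..η, (x ^ (i + 1))⁻¹) -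
      ∫ x in (1:ℝ)..η, (x ^ (i + 1))⁻¹ * sg (η - x) := by
    rw [← intervalIntegral.integral_sub hcont.intervalIntegrable
      (show IntervalIntegrable (fun x : ℝ => (x ^ (i + 1))⁻¹ * sg (η - x)) volume 1 η from
        (hcont.mul hsc.continuousOn).intervalIntegrable)]
    congr 1; funext x
    have := sg_neg (x - η)
    rw [neg_sub] at this
    rw [this]; ring
  have s3 : (∫ x in (1:ℝ)..η, (x ^ (i + 1))⁻¹ * sg (η - x)) =
      ∫ t in Ioi (0:ℝ), (if t < η - 1 then ((η - t) ^ (i + 1))⁻¹ else 0) * sg t := by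
    have := intervalIntegral.integral_comp_sub_left (a := 0) (b := η - 1)
      (fun x => (x ^ (i + 1))⁻¹ * sg (η - x)) η
    rw [sub_sub_cancel, sub_zero] at this
    rw [← this]
    simp only [sub_sub_cancel]
    rw [intervalIntegral.integral_of_le (by linarith), ← integral_Ioc_eq_integral_Ioo.symm]
    have hi : (fun t : ℝ => (if t < η - 1 then ((η - t) ^ (i + 1))⁻¹ else 0) * sg t) =
      (Set.Iio (η - 1)).indicator (fun t => ((η - t) ^ (i + 1))⁻¹ * sg t) := by
      funext t
      simp only [Set.indicator, Set.mem_Iio]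
      split_ifs <;> simp
    rw [hi, setIntegral_indicator measurableSet_Iio, Ioi_inter_Iio]
  have s4 : (∫ x in Ioi η, (x ^ (i + 1))⁻¹ * sg (x - η)) = ∫ t in Ioi (0:ℝ), ((η + t) ^ (i + 1))⁻¹ * sg t := by
    have := (measurePreserving_add_left volume η).setIntegral_preimage_emb
      (MeasurableEquiv.addLeft η).measurableEmbedding (fun x => (x ^ (i + 1))⁻¹ * sg (x - η)) (Ioi η)
    rw [← this]
    simp
  have i1 : IntegrableOn (fun t : ℝ => ((η + t) ^ (i + 1))⁻¹ * sg t) (Ioi 0) := by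
    have := int_sg (w := fun t : ℝ => ((η + t) ^ (i + 1))⁻¹) (by
      apply Measurable.aestronglyMeasurable; fun_prop) (C := 1) (n := 0)
      (by intro t ht; rw [abs_of_nonneg (by positivity), pow_zero, mul_one]
          exact inv_le_one_of_one_le₀ (one_le_pow₀ (by linarith))) 0
    simpa using this
  obtain ⟨C, _, hC⟩ := D_int (i + 1) 0
  have i2 := (hC η hη).1
  have s5 : (∫ t in Ioi (0:ℝ), Dw (i + 1) η t * sg t) = (∫ t in Ioi (0:ℝ), ((η + t) ^ (i + 1))⁻¹ * sg t) -
    ∫ t in Ioi (0:ℝ), (if t < η - 1 then ((η - t) ^ (i + 1))⁻¹ else 0) * sg t := by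
    have i3 := i1.sub i2
    rw [eq_sub_iff_add_eq, ← eq_sub_iff_add_eq', ← integral_sub i1 i2]
    congr 1; funext t; unfold Dw; ring
  rw [s1, s2, s3, s4, s5]; ring


lemma bc_neg (i l : ℕ) : bc (-((i + 1 : ℕ) : ℝ)) l = (-1) ^ l * ((i + l).factorial : ℝ) / (i.factorial * l.factorial) := by
  induction l with
  | zero =>
    have : (i.factorial : ℝ) ≠ 0 := by exact_mod_cast Nat.factorial_ne_zero _
    simp [bc, this]
  | succ l ih =>
    rw [bc, ih, ← add_assoc, Nat.factorial_succ, Nat.factorial_succ]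
    have h1 : (i.factorial : ℝ) ≠ 0 := by exact_mod_cast Nat.factorial_ne_zero _
    have h2 : (l.factorial : ℝ) ≠ 0 := by exact_mod_cast Nat.factorial_ne_zero _
    push_cast
    field_simp
    ring

noncomputable def uc (i k : ℕ) : ℝ :=
  if k = 0 then (i : ℝ)⁻¹ else
    if i ≤ k ∧ 2 ∣ (k - i) then - tauR ((k - i) / 2) * ((k - 1).factorial : ℝ) / (i.factorial : ℝ) else 0

lemma uc_tail (i l : ℕ) : uc i (i + 1 + l) = dco (i + 1) l * Mom l := by
  unfold uc
  rw [if_neg (by omega)]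
  have e1 : i + 1 + l - i = l + 1 := by omega
  have e2 : i + 1 + l - 1 = i + l := by omega
  rw [e1, e2, dco, bc_neg]
  rcases Nat.even_or_odd l with h | h
  · rw [if_neg, h.neg_one_pow]
    · simp
    · rintro ⟨_, h2⟩
      obtain ⟨r, hr⟩ := h
      omega
  · obtain ⟨r, rfl⟩ := h
    rw [if_pos ⟨by omega, by omega⟩]
    have e3 : (2 * r + 1 + 1) / 2 = r + 1 := by omega
    rw [e3, tauR, if_neg (by omega)]
    have e4 : 2 * (r + 1) - 1 = 2 * r + 1 := by omega
    rw [e4]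
    have hodd : ((-1 : ℝ)) ^ (2 * r + 1) = -1 := by rw [pow_succ, pow_mul]; norm_num
    rw [hodd]
    have h1 : (i.factorial : ℝ) ≠ 0 := by exact_mod_cast Nat.factorial_ne_zero _
    have h2 : ((2 * r + 1).factorial : ℝ) ≠ 0 := by exact_mod_cast Nat.factorial_ne_zero _
    field_simp
    ring

lemma H_eq (i : ℕ) {η : ℝ} (hη : 1 ≤ η) : (∫ x in (1:ℝ)..η, (x ^ (i + 1))⁻¹) =
    (if i = 0 then Real.log η else 0) + ∑ k ∈ Finset.range (i + 1), uc i k * (η ^ k)⁻¹ := by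
  have hη0 : 0 < η := by linarith
  rcases Nat.eq_zero_or_pos i with rfl | hi
  · simp only [zero_add, pow_one, if_true, Finset.sum_range_one, uc]
    rw [integral_inv_of_pos one_pos hη0]; simp
  · rw [if_neg hi.ne', zero_add, Finset.sum_range_succ]
    have e1 : ∑ k ∈ Finset.range i, uc i k * (η ^ k)⁻¹ = (i : ℝ)⁻¹ := by
      rw [Finset.sum_eq_single 0]
      · simp [uc]
      · intro k hk hk0
        have : k < i := Finset.mem_range.mp hk
        rw [uc, if_neg hk0, if_neg (by omega), zero_mul]
      · intro h; exact absurd (Finset.mem_range.mpr hi) h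
    have e2 : uc i i = - (i : ℝ)⁻¹ := by
      rw [uc, if_neg hi.ne', if_pos ⟨le_rfl, by simp⟩]
      obtain ⟨n, rfl⟩ : ∃ n, i = n + 1 := ⟨i - 1, by omega⟩
      simp only [tauR, Nat.factorial_succ]
      have h1 : (n.factorial : ℝ) ≠ 0 := by exact_mod_cast Nat.factorial_ne_zero _
      simp
      field_simp
    rw [e1, e2]
    have hi0 : (i : ℝ) ≠ 0 := by exact_mod_cast hi.ne'
    rw [intervalIntegral.integral_eq_sub_of_hasDerivAt (f := fun x => - (i : ℝ)⁻¹ * (x ^ i)⁻¹)]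
    · simp; ring
    · intro x hx
      rw [Set.uIcc_of_le hη] at hx
      have hx0 : 0 < x := by linarith [hx.1]
      have := ((hasDerivAt_pow i x).inv (by positivity)).const_mul (-(i : ℝ)⁻¹)
      refine this.congr_deriv ?_
      obtain ⟨n, rfl⟩ : ∃ n, i = n + 1 := ⟨i - 1, by omega⟩
      simp only [Nat.add_sub_cancel]
      field_simp
      ring
    · apply ContinuousOn.intervalIntegrable
      apply ContinuousOn.inv₀ (by fun_prop)
      intro x hx
      rw [Set.uIcc_of_le hη] at hx
      have := hx.1
      positivity

/-- asymptotic expansion in powers of 1/η -/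
def AE (f : ℝ → ℝ) (u : ℕ → ℝ) : Prop := ∀ N : ℕ,
  (fun η => f η - ∑ k ∈ Finset.range N, u k * (η ^ k)⁻¹) =O[atTop] (fun η : ℝ => (η ^ N)⁻¹)

lemma inv_pow_isBigO {a b : ℕ} (h : a ≤ b) : (fun η : ℝ => (η ^ b)⁻¹) =O[atTop] (fun η : ℝ => (η ^ a)⁻¹) := by
  apply IsBigO.of_bound 1
  filter_upwards [eventually_ge_atTop 1] with η hη
  rw [Real.norm_eq_abs, Real.norm_eq_abs, abs_of_nonneg (by positivity), abs_of_nonneg (by positivity), one_mul]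
  exact inv_anti₀ (by positivity) (pow_le_pow_right₀ hη h)

lemma AE_of_ge {f : ℝ → ℝ} {u : ℕ → ℝ} (N0 : ℕ) (h : ∀ L : ℕ,
  (fun η => f η - ∑ k ∈ Finset.range (N0 + L), u k * (η ^ k)⁻¹) =O[atTop] (fun η : ℝ => (η ^ (N0 + L))⁻¹)) : AE f u := by
  intro N
  have h1 := (h N).trans (inv_pow_isBigO (show N ≤ N0 + N by omega))
  have h2 : (fun η : ℝ => ∑ k ∈ Finset.range N0, u (N + k) * (η ^ (N + k))⁻¹) =O[atTop] (fun η : ℝ => (η ^ N)⁻¹) := by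
    apply IsBigO.fun_sum
    intro k _
    exact (inv_pow_isBigO (by omega)).const_mul_left _
  refine (h1.add h2).congr_left ?_
  intro η
  rw [add_comm N0 N, Finset.sum_range_add]
  ring

lemma J_AE (i : ℕ) : AE (fun η => Jf i η - (if i = 0 then Real.log η else 0)) (uc i) := by
  apply AE_of_ge (i + 1)
  intro L
  obtain ⟨C, hC0, hC⟩ := D_int (i + 1) L
  apply IsBigO.of_bound C
  filter_upwards [eventually_gt_atTop 2] with η hη
  have h := (hC η hη).2
  rw [J_eq i hη, H_eq i (by linarith), Finset.sum_range_add _ (i + 1) L, Real.norm_eq_abs, Real.norm_eq_abs,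
    abs_of_nonneg (by positivity : 0 ≤ (η ^ (i + 1 + L))⁻¹)]
  simp_rw [uc_tail]
  convert h using 2
  ring


lemma bc_poch (α : ℝ) (j : ℕ) : bc α j = (-1) ^ j * ((ascPochhammer ℝ j).eval (-α) / j.factorial) := by
  induction j with
  | zero => simp [bc]
  | succ j ih =>
    have h2 : (j.factorial : ℝ) ≠ 0 := by exact_mod_cast Nat.factorial_ne_zero _
    rw [bc, ih, ascPochhammer_succ_eval, Nat.factorial_succ]
    push_cast
    field_simp
    ring

lemma sg_decay (n : ℕ) : ∃ C : ℝ, 0 ≤ C ∧ ∀ η : ℝ, 1 ≤ η → ∀ x : ℝ, 0 ≤ x →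
    sg (η - x) ≤ C * (η ^ n)⁻¹ * (1 + x) ^ n := by
  refine ⟨2 ^ n * n.factorial, by positivity, fun η hη x hx => ?_⟩
  have hη0 : 0 < η := by linarith
  have hf : (1 : ℝ) ≤ n.factorial := by exact_mod_cast Nat.one_le_iff_ne_zero.mpr (Nat.factorial_ne_zero _)
  rcases le_or_gt (η / 2) x with h | h
  · calc sg (η - x) ≤ 1 := sg_le_one _
      _ ≤ (2 * (1 + x) / η) ^ n := one_le_pow₀ (by rw [le_div_iff₀ hη0]; linarith)
      _ = 2 ^ n * 1 * (η ^ n)⁻¹ * (1 + x) ^ n := by rw [div_pow, mul_pow]; field_simp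
      _ ≤ _ := by gcongr
  · have h1 := Real.pow_div_factorial_le_exp (η / 2) (by positivity) n
    calc sg (η - x) ≤ Real.exp (-(η - x)) := sg_le_exp _
      _ ≤ Real.exp (-(η / 2)) := Real.exp_le_exp.mpr (by linarith)
      _ = (Real.exp (η / 2))⁻¹ := Real.exp_neg _
      _ ≤ ((η / 2) ^ n / n.factorial)⁻¹ := inv_anti₀ (by positivity) h1
      _ = 2 ^ n * n.factorial * (η ^ n)⁻¹ * 1 := by rw [div_pow]; field_simp
      _ ≤ _ := by
        gcongr
        exact one_le_pow₀ (by linarith)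

lemma rem_lemma {s : Set ℝ} (hs : MeasurableSet s) (hs0 : s ⊆ Ioi 0) {ρ : ℝ → ℝ} {N : ℕ}
    (h1 : IntegrableOn (fun x => ρ x * (1 + x) ^ N) s) (h0 : IntegrableOn ρ s) :
    (∀ η, IntegrableOn (fun x => ρ x * sg (x - η)) s) ∧
    (fun η => (∫ x in s, ρ x * sg (x - η)) - ∫ x in s, ρ x) =O[atTop] (fun η : ℝ => (η ^ N)⁻¹) := by
  have hi : ∀ η, IntegrableOn (fun x => ρ x * sg (x - η)) s := by
    intro η
    refine Integrable.mono h0 (h0.aestronglyMeasurable.mul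
      (sg_cont.comp (continuous_id.sub continuous_const)).aestronglyMeasurable) ?_
    filter_upwards with x
    rw [norm_mul, Real.norm_eq_abs (sg _), abs_of_pos (sg_pos _)]
    exact mul_le_of_le_one_right (norm_nonneg _) (sg_le_one _)
  refine ⟨hi, ?_⟩
  obtain ⟨C, hC0, hC⟩ := sg_decay N
  apply IsBigO.of_bound (C * ∫ x in s, ‖ρ x * (1 + x) ^ N‖)
  filter_upwards [eventually_ge_atTop 1] with η hη
  rw [← integral_sub (hi η) h0]
  refine (norm_integral_le_of_norm_le (h1.norm.const_mul (C * (η ^ N)⁻¹)) ?_).trans ?_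
  · filter_upwards [ae_restrict_mem hs] with x hx
    have hx0 : (0:ℝ) < x := hs0 hx
    have e : ρ x * sg (x - η) - ρ x = - (ρ x * sg (η - x)) := by
      have := sg_neg (x - η)
      rw [neg_sub] at this
      rw [this]; ring
    rw [e, norm_neg, norm_mul, norm_mul, Real.norm_eq_abs (sg _), abs_of_pos (sg_pos _),
      Real.norm_eq_abs ((1 + x) ^ N), abs_of_nonneg (by positivity)]
    calc ‖ρ x‖ * sg (η - x) ≤ ‖ρ x‖ * (C * (η ^ N)⁻¹ * (1 + x) ^ N) := by
          gcongr; exact hC η hη x hx0.le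
      _ = _ := by ring
  · rw [integral_const_mul, Real.norm_eq_abs, abs_of_nonneg (by positivity)]
    apply le_of_eq; ring

lemma ac_P {β : ℝ} (hβ : 0 < β) (m i : ℕ) :
    ac (2 / β) (m + i) = ac (2 / β) m * (-1) ^ i * i.factorial * Pcoef m i β := by
  have hc : 0 < 2 / β := by positivity
  induction i with
  | zero => simp [Pcoef]
  | succ i ih =>
    have h := ac_succ hc (m + i)
    rw [ih] at h
    have hp : (0:ℝ) < (ascPochhammer ℝ i).eval ((m : ℝ) + 1) := ascPochhammer_pos i _ (by positivity)
    have hf : (i.factorial : ℝ) ≠ 0 := by exact_mod_cast Nat.factorial_ne_zero _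
    have hm : ((m + i : ℕ) : ℝ) + 1 ≠ 0 := by positivity
    have hm2 : (m : ℝ) + 1 + i ≠ 0 := by positivity
    rw [← add_assoc]
    apply mul_left_cancel₀ hm
    rw [h]
    unfold Pcoef
    rw [ascPochhammer_succ_eval, ascPochhammer_succ_eval, Nat.factorial_succ]
    push_cast
    have hm3 : (m : ℝ) + i + 1 = m + 1 + i := by ring
    rw [hm3]
    generalize (2 / β) = c at *
    field_simp
    ring

noncomputable def pR (m k : ℕ) (β : ℝ) : ℝ := ∑ j ∈ Finset.range (k / 2 + 1), tauR j * Pcoef m (k - 2 * j) β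

lemma coef_sum {β : ℝ} (hβ : 0 < β) (m M k : ℕ) (hk : 1 ≤ k) (hkM : k < M) :
    ∑ i ∈ Finset.range M, ac (2 / β) (m + i) * uc i k =
      - (ac (2 / β) m * ((-1) ^ k * pR m k β * ((k - 1).factorial : ℝ))) := by
  have e1 : ∑ i ∈ Finset.range M, ac (2 / β) (m + i) * uc i k =
     ∑ i ∈ (Finset.range M).filter (fun i => i ≤ k ∧ 2 ∣ (k - i)), ac (2 / β) (m + i) * uc i k := by
    symm
    apply Finset.sum_subset (Finset.filter_subset _ _)
    intro i hi hi2
    rw [uc, if_neg (by omega), if_neg, mul_zero]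
    intro h
    exact hi2 (Finset.mem_filter.mpr ⟨hi, h⟩)
  rw [e1, pR, Finset.mul_sum, Finset.sum_mul, Finset.mul_sum, ← Finset.sum_neg_distrib]
  apply Finset.sum_nbij' (fun i => (k - i) / 2) (fun j => k - 2 * j)
  · intro i hi
    simp only [Finset.mem_filter, Finset.mem_range] at hi ⊢
    omega
  · intro j hj
    simp only [Finset.mem_filter, Finset.mem_range] at hj ⊢
    omega
  · intro i hi
    simp only [Finset.mem_filter, Finset.mem_range] at hi
    omega
  · intro j hj
    simp only [Finset.mem_range] at hj
    omega
  · intro i hi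
    simp only [Finset.mem_filter, Finset.mem_range] at hi
    have e2 : k - 2 * ((k - i) / 2) = i := by omega
    rw [e2, ac_P hβ, uc, if_neg (by omega), if_pos hi.2]
    have hs : (-1 : ℝ) ^ k = (-1) ^ i := by
      have : k = i + 2 * ((k - i) / 2) := by omega
      rw [this, pow_add, pow_mul]; norm_num
    rw [hs]
    have hf : (i.factorial : ℝ) ≠ 0 := by exact_mod_cast Nat.factorial_ne_zero _
    field_simp

noncomputable def rr (c : ℝ) (m M : ℕ) (x : ℝ) : ℝ := (x ^ M)⁻¹ * gf c (m + M) x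

lemma rr_cont {c : ℝ} (hc : 0 < c) (m M : ℕ) : ContinuousOn (rr c m M) (Ioi 0) := by
  apply ContinuousOn.mul
  · apply ContinuousOn.inv₀ (by fun_prop)
    intro x hx
    have : (0:ℝ) < x := hx
    positivity
  · intro x hx
    exact (gf_deriv hc _ hx).continuousAt.continuousWithinAt

lemma rr_int {c : ℝ} (hc : 0 < c) (m N : ℕ) :
    IntegrableOn (fun x => rr c m (N + 1) x * (1 + x) ^ N) (Ioi 1) ∧ IntegrableOn (rr c m (N + 1)) (Ioi 1) := by
  obtain ⟨C, hC0, hC⟩ := gf_bound hc (m + (N + 1))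
  have hx2 : IntegrableOn (fun x : ℝ => x ^ (-2 : ℝ)) (Ioi 1) := integrableOn_Ioi_rpow_of_lt (by norm_num) one_pos
  have hm : AEStronglyMeasurable (rr c m (N + 1)) (volume.restrict (Ioi 1)) :=
    ((rr_cont hc m (N + 1)).mono (Ioi_subset_Ioi zero_le_one)).aestronglyMeasurable measurableSet_Ioi
  have h1 : IntegrableOn (fun x => rr c m (N + 1) x * (1 + x) ^ N) (Ioi 1) := by
    refine Integrable.mono' (hx2.const_mul (C * 2 ^ N)) (hm.mul (by
      apply Continuous.aestronglyMeasurable; fun_prop)) ?_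
    filter_upwards [ae_restrict_mem measurableSet_Ioi] with x hx
    have hx1 : (1:ℝ) < x := hx
    have hx0 : 0 < x := by linarith
    rw [rr, norm_mul, norm_mul, Real.norm_eq_abs, Real.norm_eq_abs, Real.norm_eq_abs,
      abs_of_nonneg (by positivity : 0 ≤ (x ^ (N + 1))⁻¹), abs_of_nonneg (by positivity : 0 ≤ (1 + x) ^ N)]
    calc _ ≤ (x ^ (N + 1))⁻¹ * (C / x) * (2 * x) ^ N := by
          gcongr
          · exact hC x hx1.le
          · linarith
      _ = C * 2 ^ N * x ^ (-2 : ℝ) := by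
          rw [Real.rpow_neg hx0.le, Real.rpow_two, mul_pow]
          field_simp
          ring
  refine ⟨h1, ?_⟩
  refine Integrable.mono h1 hm ?_
  filter_upwards [ae_restrict_mem measurableSet_Ioi] with x hx
  have hx1 : (1:ℝ) < x := hx
  rw [norm_mul, Real.norm_eq_abs ((1 + x) ^ N), abs_of_nonneg (by positivity)]
  exact le_mul_of_one_le_right (norm_nonneg _) (one_le_pow₀ (by linarith))

lemma gf_cont' {c : ℝ} (hc : 0 < c) {m : ℕ} (hm : 2 ≤ m) : ContinuousOn (gf c m) (Ici 0) := by
  obtain ⟨n, rfl⟩ : ∃ n, m = n + 2 := ⟨m - 2, by omega⟩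
  exact gf_cont hc n

lemma const_eq {c : ℝ} (hc : 0 < c) {m : ℕ} (hm : 2 ≤ m) (N : ℕ) :
    (∫ x in Ioc (0:ℝ) 1, gf c m x) + (∫ x in Ioi (1:ℝ), rr c m (N + 1) x) +
      ∑ i ∈ Finset.range (N + 1), ac c (m + i) * uc i 0 = ac c m * lam c m := by
  obtain ⟨Φ, h1, h2, h3, h4⟩ := exists_Phi hc m (by omega)
  have hgc := gf_cont' hc hm
  have f1 : (∫ x in Ioc (0:ℝ) 1, gf c m x) = Φ 1 := by
    rw [← intervalIntegral.integral_of_le zero_le_one,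
      intervalIntegral.integral_eq_sub_of_hasDerivAt_of_le zero_le_one (h1.mono Icc_subset_Ici_self)
        (fun x hx => h3 x hx.1), h2, sub_zero]
    apply ContinuousOn.intervalIntegrable
    rw [Set.uIcc_of_le zero_le_one]
    exact hgc.mono Icc_subset_Ici_self
  have f2 : ∀ X : ℝ, 1 ≤ X → Φ X = Φ 1 + (∑ i ∈ Finset.range (N + 1), ac c (m + i) * ∫ x in (1:ℝ)..X, (x ^ (i + 1))⁻¹) +
      ∫ x in (1:ℝ)..X, rr c m (N + 1) x := by
    intro X hX
    have hsub : Set.uIcc 1 X ⊆ Ioi (0:ℝ) := by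
      rw [Set.uIcc_of_le hX]
      intro x hx
      have := hx.1
      show (0:ℝ) < x
      linarith
    have c1 : ∀ i : ℕ, IntervalIntegrable (fun x : ℝ => (x ^ (i + 1))⁻¹) volume 1 X := by
      intro i
      apply ContinuousOn.intervalIntegrable
      apply ContinuousOn.inv₀ (by fun_prop)
      intro x hx
      have : (0:ℝ) < x := hsub hx
      positivity
    have c2 : IntervalIntegrable (rr c m (N + 1)) volume 1 X :=
      ((rr_cont hc m (N + 1)).mono hsub).intervalIntegrable
    have c3 : IntervalIntegrable (gf c m) volume 1 X :=
      (hgc.mono (hsub.trans Ioi_subset_Ici_self)).intervalIntegrable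
    have g1 : (∫ x in (1:ℝ)..X, gf c m x) = Φ X - Φ 1 :=
      intervalIntegral.integral_eq_sub_of_hasDerivAt (fun x hx => h3 x (hsub hx)) c3
    have g2 : (∫ x in (1:ℝ)..X, gf c m x) = ∫ x in (1:ℝ)..X,
        (∑ i ∈ Finset.range (N + 1), ac c (m + i) * (x ^ (i + 1))⁻¹ + rr c m (N + 1) x) := by
      apply intervalIntegral.integral_congr
      intro x hx
      exact gf_iter c m (N + 1) (hsub hx)
    have cS : IntervalIntegrable (fun x : ℝ => ∑ i ∈ Finset.range (N + 1), ac c (m + i) * (x ^ (i + 1))⁻¹) volume 1 X := by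
      apply ContinuousOn.intervalIntegrable
      apply continuousOn_finsetSum
      intro i _
      apply ContinuousOn.mul continuousOn_const
      apply ContinuousOn.inv₀ (by fun_prop)
      intro x hx
      have : (0:ℝ) < x := hsub hx
      positivity
    rw [intervalIntegral.integral_add cS c2,
      intervalIntegral.integral_finsetSum (fun i _ => (c1 i).const_mul _)] at g2
    simp_rw [intervalIntegral.integral_const_mul] at g2
    linarith
  have t1 : Tendsto (fun X : ℝ => ∫ x in (1:ℝ)..X, rr c m (N + 1) x) atTop (nhds (∫ x in Ioi (1:ℝ), rr c m (N + 1) x)) :=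
    intervalIntegral_tendsto_integral_Ioi 1 (rr_int hc m N).2 tendsto_id
  have t2 : ∀ i : ℕ, Tendsto (fun X : ℝ => ∑ k ∈ Finset.range (i + 1), uc i k * (X ^ k)⁻¹) atTop (nhds (uc i 0)) := by
    intro i
    simp_rw [Finset.sum_range_succ']
    have : Tendsto (fun X : ℝ => ∑ k ∈ Finset.range i, uc i (k + 1) * (X ^ (k + 1))⁻¹) atTop
        (nhds (∑ k ∈ Finset.range i, uc i (k + 1) * 0)) := by
      apply tendsto_finsetSum
      intro k _
      exact ((tendsto_pow_atTop (by omega)).inv_tendsto_atTop).const_mul _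
    simpa using this.add_const (uc i 0)
  have t3 : Tendsto (fun X : ℝ => Φ 1 + (∑ i ∈ Finset.range (N + 1), ac c (m + i) * ∑ k ∈ Finset.range (i + 1), uc i k * (X ^ k)⁻¹) +
      ∫ x in (1:ℝ)..X, rr c m (N + 1) x) atTop (nhds (Φ 1 + (∑ i ∈ Finset.range (N + 1), ac c (m + i) * uc i 0) +
      ∫ x in Ioi (1:ℝ), rr c m (N + 1) x)) :=
    ((tendsto_finsetSum _ (fun i _ => (t2 i).const_mul _)).const_add _).add t1
  have t4 := h4.congr' (f₂ := fun X : ℝ => Φ 1 + (∑ i ∈ Finset.range (N + 1), ac c (m + i) * ∑ k ∈ Finset.range (i + 1), uc i k * (X ^ k)⁻¹) +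
      ∫ x in (1:ℝ)..X, rr c m (N + 1) x) (by
    filter_upwards [eventually_ge_atTop 1] with X hX
    rw [f2 X hX]
    have e : ∑ i ∈ Finset.range (N + 1), ac c (m + i) * (∫ x in (1:ℝ)..X, (x ^ (i + 1))⁻¹) =
       ∑ i ∈ Finset.range (N + 1), ac c (m + i) * ∑ k ∈ Finset.range (i + 1), uc i k * (X ^ k)⁻¹ + ac c m * Real.log X := by
      simp_rw [H_eq _ hX, mul_add]
      rw [Finset.sum_add_distrib, add_comm]
      congr 1
      simp
    rw [e]; ring)
  have := tendsto_nhds_unique t3 t4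
  rw [f1]; linarith

lemma I_split {c : ℝ} (hc : 0 < c) {m : ℕ} (hm : 2 ≤ m) (N : ℕ) (η : ℝ) :
    (∫ x in Ioi (0:ℝ), gf c m x * sg (x - η)) = (∫ x in Ioc (0:ℝ) 1, gf c m x * sg (x - η)) +
      (∑ i ∈ Finset.range (N + 1), ac c (m + i) * Jf i η) + ∫ x in Ioi (1:ℝ), rr c m (N + 1) x * sg (x - η) := by
  have hgc := gf_cont' hc hm
  have hr := (rem_lemma measurableSet_Ioi (Ioi_subset_Ioi zero_le_one) (rr_int hc m N).1 (rr_int hc m N).2).1 η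
  have i0 : IntegrableOn (fun x => gf c m x * sg (x - η)) (Ioc 0 1) := by
    have : ContinuousOn (fun x => gf c m x * sg (x - η)) (Icc 0 1) :=
      (hgc.mono Icc_subset_Ici_self).mul (sg_cont.comp (continuous_id.sub continuous_const)).continuousOn
    exact this.integrableOn_Icc.mono_set Ioc_subset_Icc_self
  have is : ∀ i ∈ Finset.range (N + 1), IntegrableOn (fun x => ac c (m + i) * ((x ^ (i + 1))⁻¹ * sg (x - η))) (Ioi 1) :=
    fun i _ => (Jint i η).const_mul _
  have iS : IntegrableOn (fun x => ∑ i ∈ Finset.range (N + 1), ac c (m + i) * ((x ^ (i + 1))⁻¹ * sg (x - η))) (Ioi 1) :=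
    integrable_finsetSum _ is
  have eq : ∀ x ∈ Ioi (1:ℝ), gf c m x * sg (x - η) =
      (∑ i ∈ Finset.range (N + 1), ac c (m + i) * ((x ^ (i + 1))⁻¹ * sg (x - η))) + rr c m (N + 1) x * sg (x - η) := by
    intro x hx
    have hx1 : (1:ℝ) < x := hx
    rw [gf_iter c m (N + 1) (by linarith : 0 < x), add_mul, Finset.sum_mul]
    congr 1
    apply Finset.sum_congr rfl
    intro i _; ring
  have i1 : IntegrableOn (fun x => gf c m x * sg (x - η)) (Ioi 1) :=
    IntegrableOn.congr_fun (iS.add hr) (fun x hx => (eq x hx).symm) measurableSet_Ioi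
  rw [← Ioc_union_Ioi_eq_Ioi (zero_le_one' ℝ), setIntegral_union (Ioc_disjoint_Ioi le_rfl) measurableSet_Ioi i0 i1,
    setIntegral_congr_fun measurableSet_Ioi eq, integral_add iS hr, integral_finsetSum _ is, add_assoc]
  simp_rw [integral_const_mul]
  rfl

lemma I_asymp {β : ℝ} (hβ : 0 < β) {m : ℕ} (hm : 2 ≤ m) (N : ℕ) (hN : 1 ≤ N) :
    (fun η : ℝ => (∫ x in Ioi (0:ℝ), gf (2 / β) m x * sg (x - η)) - ac (2 / β) m * Real.log η
      - ac (2 / β) m * lam (2 / β) m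
      + ∑ k ∈ Finset.Icc 1 (N - 1), ac (2 / β) m * ((-1) ^ k * pR m k β * ((k - 1).factorial : ℝ)) * (η ^ k)⁻¹)
      =O[atTop] (fun η : ℝ => (η ^ N)⁻¹) := by
  have hc : 0 < 2 / β := by positivity
  set c := 2 / β with hcdef
  have hgc := gf_cont' hc hm
  have hA := (rem_lemma (s := Ioc 0 1) (ρ := gf c m) (N := N) measurableSet_Ioc Ioc_subset_Ioi_self
    (((hgc.mono Icc_subset_Ici_self).mul (by fun_prop)).integrableOn_Icc.mono_set Ioc_subset_Icc_self)
    ((hgc.mono Icc_subset_Ici_self).integrableOn_Icc.mono_set Ioc_subset_Icc_self)).2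
  have hB := (rem_lemma measurableSet_Ioi (Ioi_subset_Ioi zero_le_one) (rr_int hc m N).1 (rr_int hc m N).2).2
  have hJ : (fun η : ℝ => ∑ i ∈ Finset.range (N + 1), ac c (m + i) *
     ((Jf i η - (if i = 0 then Real.log η else 0)) - ∑ k ∈ Finset.range N, uc i k * (η ^ k)⁻¹)) =O[atTop] (fun η : ℝ => (η ^ N)⁻¹) := by
    apply IsBigO.fun_sum
    intro i _
    exact (J_AE i N).const_mul_left _
  refine ((hA.add hB).add hJ).congr_left ?_
  intro η
  rw [I_split hc hm N η, ← const_eq hc hm N]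
  have e1 : ∑ i ∈ Finset.range (N + 1), ac c (m + i) *
     ((Jf i η - (if i = 0 then Real.log η else 0)) - ∑ k ∈ Finset.range N, uc i k * (η ^ k)⁻¹) =
     (∑ i ∈ Finset.range (N + 1), ac c (m + i) * Jf i η) - ac c m * Real.log η -
      ∑ k ∈ Finset.range N, (∑ i ∈ Finset.range (N + 1), ac c (m + i) * uc i k) * (η ^ k)⁻¹ := by
    simp_rw [mul_sub]
    rw [Finset.sum_sub_distrib, Finset.sum_sub_distrib]
    congr 1
    · congr 1
      simp
    · simp_rw [Finset.mul_sum, Finset.sum_mul]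
      rw [Finset.sum_comm]
      apply Finset.sum_congr rfl; intro k _
      apply Finset.sum_congr rfl; intro i _
      ring
  obtain ⟨n, rfl⟩ : ∃ n, N = n + 1 := ⟨N - 1, by omega⟩
  have e2 : ∑ k ∈ Finset.range (n + 1), (∑ i ∈ Finset.range (n + 1 + 1), ac c (m + i) * uc i k) * (η ^ k)⁻¹ =
     (∑ i ∈ Finset.range (n + 1 + 1), ac c (m + i) * uc i 0) -
      ∑ k ∈ Finset.Icc 1 (n + 1 - 1), ac c m * ((-1) ^ k * pR m k β * ((k - 1).factorial : ℝ)) * (η ^ k)⁻¹ := by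
    have e3 : Finset.range (n + 1) = insert 0 (Finset.Icc 1 (n + 1 - 1)) := by
      ext k; simp only [Finset.mem_range, Finset.mem_insert, Finset.mem_Icc]; omega
    rw [e3, Finset.sum_insert (by simp)]
    simp only [pow_zero, inv_one, mul_one]
    rw [sub_eq_add_neg, ← Finset.sum_neg_distrib]
    congr 1
    apply Finset.sum_congr rfl
    intro k hk
    rw [Finset.mem_Icc] at hk
    rw [coef_sum hβ m (n + 1 + 1) k hk.1 (by omega)]; ring
  rw [e1, e2]; ring


lemma Frel_eq {β : ℝ} (hβ : 0 < β) {m : ℕ} (hm : 2 ≤ m) (η : ℝ) :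
    Frel ((m : ℝ) - 3 / 2) η β - FR m β η = ∫ x in Ioi (0:ℝ), gf (2 / β) m x * sg (x - η) := by
  have hc : 0 < 2 / β := by positivity
  set c := 2 / β with hcd
  have hm2 : (2:ℝ) ≤ m := by exact_mod_cast hm
  have i1 : IntegrableOn (fun x : ℝ => (x ^ ((m : ℝ) - 3 / 2) * (1 + x / c) ^ (1 / 2 : ℝ)) * sg (x - η)) (Ioi 0) := by
    apply int_sg (C := 1 + 1 / c) (n := m + 1)
    · apply Measurable.aestronglyMeasurable
      fun_prop
    · intro x hx
      have a1 : x ^ ((m : ℝ) - 3 / 2) ≤ (1 + x) ^ m := by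
        calc x ^ ((m : ℝ) - 3 / 2) ≤ (1 + x) ^ ((m : ℝ) - 3 / 2) :=
              Real.rpow_le_rpow hx.le (by linarith) (by linarith)
          _ ≤ (1 + x) ^ (m : ℝ) := Real.rpow_le_rpow_of_exponent_le (by linarith) (by linarith)
          _ = _ := Real.rpow_natCast _ _
      have a2 : (1 + x / c) ^ (1 / 2 : ℝ) ≤ (1 + 1 / c) * (1 + x) := by
        have hxc : 0 < x / c := by positivity
        calc (1 + x / c) ^ (1 / 2 : ℝ) ≤ (1 + x / c) ^ (1 : ℝ) :=
              Real.rpow_le_rpow_of_exponent_le (by linarith) (by norm_num)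
          _ = 1 + x / c := Real.rpow_one _
          _ ≤ _ := by
              have : 0 < 1 / c := by positivity
              have : x / c = 1 / c * x := by ring
              nlinarith
      rw [abs_of_nonneg (by positivity)]
      calc _ ≤ (1 + x) ^ m * ((1 + 1 / c) * (1 + x)) := by gcongr
        _ = _ := by ring
  have i2 : ∀ j ∈ Finset.range m, IntegrableOn (fun x : ℝ => ac c j * (x ^ ((m : ℝ) - j - 1) * sg (x - η))) (Ioi 0) := by
    intro j hj
    have hj1 : (j:ℝ) + 1 ≤ m := by exact_mod_cast (Finset.mem_range.mp hj)
    apply Integrable.const_mul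
    apply int_sg (C := 1) (n := m)
    · apply Measurable.aestronglyMeasurable
      fun_prop
    · intro x hx
      rw [abs_of_nonneg (by positivity), one_mul]
      calc x ^ ((m : ℝ) - j - 1) ≤ (1 + x) ^ ((m : ℝ) - j - 1) :=
              Real.rpow_le_rpow hx.le (by linarith) (by linarith)
          _ ≤ (1 + x) ^ (m : ℝ) := Real.rpow_le_rpow_of_exponent_le (by linarith) (by
                have : (0:ℝ) ≤ j := by positivity
                linarith)
          _ = _ := Real.rpow_natCast _ _
  have e1 : (∫ x in Ioi (0:ℝ), gf c m x * sg (x - η)) = ∫ x in Ioi (0:ℝ),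
      ((x ^ ((m : ℝ) - 3 / 2) * (1 + x / c) ^ (1 / 2 : ℝ)) * sg (x - η) -
        ∑ j ∈ Finset.range m, ac c j * (x ^ ((m : ℝ) - j - 1) * sg (x - η))) := by
    apply setIntegral_congr_fun measurableSet_Ioi
    intro x hx
    simp only
    rw [gf_formula c m hx, sub_mul, Finset.sum_mul]
    congr 1
    apply Finset.sum_congr rfl
    intro j _
    ring
  rw [e1, integral_sub i1 (integrable_finsetSum _ i2), integral_finsetSum _ i2]
  congr 1
  · rw [Frel]
    apply setIntegral_congr_fun measurableSet_Ioi
    intro x hx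
    simp only [sg]
    rw [Real.sqrt_eq_rpow, hcd]
    have : x / (2 / β) = β * x / 2 := by field_simp
    rw [this]
    ring
  · rw [FR]
    apply Finset.sum_congr rfl
    intro j _
    rw [integral_const_mul, ac, bc_poch, Fstd]
    rw [show (-1 / 2 : ℝ) = -(1 / 2) by norm_num]
    congr 1
    apply setIntegral_congr_fun measurableSet_Ioi
    intro x hx
    simp only [sg]
    ring

lemma U_int {m : ℕ} (hm : 2 ≤ m) {z : ℝ} (hz : 0 < z) :
    IntegrableOn (fun t : ℝ => Real.exp (-z * t) * t ^ ((1 : ℝ) / 2) * (1 + t) ^ ((m : ℝ) - 3 / 2)) (Ioi 0) := by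
  have hm2 : (2:ℝ) ≤ m := by exact_mod_cast hm
  refine Integrable.mono' (int_poly_exp (m + 1) hz) ?_ ?_
  · apply Measurable.aestronglyMeasurable
    fun_prop
  · filter_upwards [ae_restrict_mem measurableSet_Ioi] with x hx
    have hx0 : (0:ℝ) < x := hx
    rw [Real.norm_eq_abs, abs_of_nonneg (by positivity)]
    have a1 : (1 + x) ^ ((m : ℝ) - 3 / 2) ≤ (1 + x) ^ m := by
        calc (1 + x) ^ ((m : ℝ) - 3 / 2) 
            ≤ (1 + x) ^ (m : ℝ) := Real.rpow_le_rpow_of_exponent_le (by linarith) (by linarith)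
          _ = _ := Real.rpow_natCast _ _
    have a2 : x ^ ((1:ℝ) / 2) ≤ 1 + x := by
        calc x ^ ((1:ℝ) / 2) ≤ (1 + x) ^ ((1:ℝ) / 2) :=
              Real.rpow_le_rpow hx0.le (by linarith) (by norm_num)
          _ ≤ (1 + x) ^ (1 : ℝ) := Real.rpow_le_rpow_of_exponent_le (by linarith) (by norm_num)
          _ = _ := Real.rpow_one _
    calc _ ≤ Real.exp (-z * x) * (1 + x) * (1 + x) ^ m := by gcongr
      _ = _ := by ring

lemma U_nonneg (m : ℕ) (z : ℝ) : 0 ≤ Ubig m z := by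
  rw [Ubig]
  apply mul_nonneg
  · have := Real.Gamma_pos_of_pos (show (0:ℝ) < 3 / 2 by norm_num)
    positivity
  · apply setIntegral_nonneg measurableSet_Ioi
    intro x hx
    have hx0 : (0:ℝ) < x := hx
    positivity

lemma U_mono {m : ℕ} (hm : 2 ≤ m) {z w : ℝ} (hz : 0 < z) (h : z ≤ w) : Ubig m w ≤ Ubig m z := by
  rw [Ubig, Ubig]
  have := Real.Gamma_pos_of_pos (show (0:ℝ) < 3 / 2 by norm_num)
  apply mul_le_mul_of_nonneg_left _ (by positivity)
  apply setIntegral_mono_on (U_int hm (hz.trans_le h)) (U_int hm hz) measurableSet_Ioi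
  intro x hx
  have hx0 : (0:ℝ) < x := hx
  have : Real.exp (-w * x) ≤ Real.exp (-z * x) := by
    apply Real.exp_le_exp.mpr
    nlinarith
  gcongr

lemma FS_bound {β : ℝ} (hβ : 0 < β) {m : ℕ} (hm : 2 ≤ m) (N : ℕ) :
    (fun η => FS m β η) =O[atTop] (fun η : ℝ => (η ^ N)⁻¹) := by
  have h1 : (fun η => FS m β η) =O[atTop] (fun η : ℝ => Real.exp (-η)) := by
    set K := (Real.sqrt π / 2) * (2 / β) ^ ((m : ℝ) - 1 / 2) * (-1 : ℝ) ^ m with hK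
    set S := (1 - Real.exp (-1))⁻¹ with hS
    apply IsBigO.of_bound (‖K‖ * (Ubig m (2 / β) * S))
    filter_upwards [eventually_ge_atTop 1] with η hη
    have he1 : Real.exp (-1) < 1 := by rw [Real.exp_lt_one_iff]; norm_num
    have hs : HasSum (fun n : ℕ => Real.exp (-η) * Ubig m (2 / β) * Real.exp (-1) ^ n) (Real.exp (-η) * Ubig m (2 / β) * S) :=
      (hasSum_geometric_of_lt_one (Real.exp_pos _).le he1).mul_left _
    rw [FS, ← hK, norm_mul, Real.norm_eq_abs (Real.exp (-η)), abs_of_pos (Real.exp_pos _), mul_assoc]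
    apply mul_le_mul_of_nonneg_left _ (norm_nonneg _)
    refine (tsum_of_norm_bounded hs ?_).trans (le_of_eq (by ring))
    intro n
    have hn : (0:ℝ) ≤ n := by positivity
    rw [norm_mul, norm_mul, norm_pow, norm_neg, norm_one, one_pow, one_mul, Real.norm_eq_abs, Real.norm_eq_abs,
      abs_of_pos (Real.exp_pos _), abs_of_nonneg (U_nonneg _ _)]
    have hu : Ubig m (2 * ((n : ℝ) + 1) / β) ≤ Ubig m (2 / β) := by
      apply U_mono hm (by positivity)
      gcongr
      linarith
    have hv : Real.exp (-((n : ℝ) + 1) * η - 2 * ((n : ℝ) + 1) / β) ≤ Real.exp (-η) * Real.exp (-1) ^ n := by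
      rw [← Real.exp_nat_mul, ← Real.exp_add]
      apply Real.exp_le_exp.mpr
      have : 0 ≤ 2 * ((n : ℝ) + 1) / β := by positivity
      nlinarith
    have := U_nonneg m (2 / β)
    have := U_nonneg m (2 * ((n : ℝ) + 1) / β)
    calc _ ≤ (Real.exp (-η) * Real.exp (-1) ^ n) * Ubig m (2 / β) := by gcongr
      _ = _ := by ring
  refine h1.trans ?_
  have := (isLittleO_exp_neg_mul_rpow_atTop one_pos (-(N:ℝ))).isBigO
  refine (this.congr' ?_ ?_)
  · filter_upwards with η
    simp
  · filter_upwards [eventually_gt_atTop 0] with η hη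
    rw [Real.rpow_neg hη.le, Real.rpow_natCast]

lemma Gamma_poch (m : ℕ) : Real.Gamma ((m:ℝ) - 1 / 2) = (ascPochhammer ℝ m).eval (-(1 / 2) : ℝ) * Real.Gamma (-1 / 2) := by
  induction m with
  | zero => simp; norm_num
  | succ n ih =>
    have hne : (n:ℝ) - 1 / 2 ≠ 0 := by
      intro h
      have : (2 * n : ℝ) = 1 := by linarith
      have : 2 * n = 1 := by exact_mod_cast this
      omega
    rw [ascPochhammer_succ_eval, show ((n + 1 : ℕ) : ℝ) - 1 / 2 = ((n:ℝ) - 1 / 2) + 1 by push_cast; ring,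
      Real.Gamma_add_one hne, ih]
    ring

lemma K_eq (β : ℝ) (m : ℕ) :
    Real.Gamma ((m : ℝ) - 1 / 2) * (2 / β) ^ ((m : ℝ) - 1 / 2) * Acoef m = -ac (2 / β) m := by
  have hG : Real.Gamma (-1 / 2) ≠ 0 := by
    apply Real.Gamma_ne_zero
    intro n h
    have : (2 * n : ℝ) = 1 := by linarith
    have : 2 * n = 1 := by exact_mod_cast this
    omega
  have hf : (m.factorial : ℝ) ≠ 0 := by exact_mod_cast Nat.factorial_ne_zero _
  rw [Gamma_poch, Acoef, ac, bc_poch, pow_succ]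
  generalize Real.Gamma (-1 / 2) = G at hG ⊢
  field_simp

lemma pcoef_eq (m k : ℕ) (β : ℝ) : pcoef m k β = ((pR m k β : ℝ) : ℂ) := by
  rw [pcoef, pR, Complex.ofReal_sum]
  apply Finset.sum_congr rfl
  intro j _
  rw [tau2_eq, Complex.ofReal_mul]

lemma pR_zero (m : ℕ) (β : ℝ) : pR m 0 β = 1 := by
  have h0 : tauR 0 = 1 := by
    have h := tau2_eq 0
    rw [tau2, if_pos rfl] at h
    exact_mod_cast h.symm
  simp [pR, h0, Pcoef]

lemma q0_eq (m : ℕ) (β : ℝ) : q0coef m β = -lam (2 / β) m + Real.eulerMascheroniConstant := by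
  rw [q0coef, lam, digamma_one]
  ring

theorem stmt9 (m : ℕ) (hm : 2 ≤ m) (β : ℝ) (hβ : 0 < β) :
    ∀ N : ℕ, 1 ≤ N →
      (fun η : ℝ => (Frel ((m : ℝ) - 3 / 2) η β : ℂ) - ((FR m β η : ℝ) : ℂ) -
          ((FS m β η : ℝ) : ℂ) -
          ((Real.Gamma ((m : ℝ) - 1 / 2) * (2 / β) ^ ((m : ℝ) - 1 / 2) * Acoef m : ℝ) : ℂ) *
            (-(((Real.eulerMascheroniConstant + Real.log η : ℝ)) : ℂ) * pcoef m 0 β +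
              ((q0coef m β : ℝ) : ℂ) +
              ∑ k ∈ Finset.Icc 1 (N - 1),
                (-1 : ℂ) ^ k * pcoef m k β * ((k - 1).factorial : ℂ) *
                  (η : ℂ) ^ (-(k : ℤ)))) =O[atTop]
        (fun η : ℝ => η ^ (-(N : ℝ))) := by
  intro N hN
  have h := (I_asymp hβ hm N hN).sub (FS_bound hβ hm N)
  rw [← Complex.isBigO_ofReal_left] at h
  refine h.congr' ?_ ?_
  · filter_upwards with η
    rw [← Frel_eq hβ hm η, K_eq, q0_eq, pcoef_eq, pR_zero]
    simp only [pcoef_eq]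
    push_cast
    have e : ∑ k ∈ Finset.Icc 1 (N - 1), ((ac (2 / β) m : ℝ) : ℂ) * ((-1) ^ k * ((pR m k β : ℝ) : ℂ) * ((k - 1).factorial : ℂ)) * ((η:ℂ) ^ k)⁻¹
      = ((ac (2 / β) m : ℝ) : ℂ) * ∑ k ∈ Finset.Icc 1 (N - 1),
                (-1 : ℂ) ^ k * ((pR m k β : ℝ) : ℂ) * ((k - 1).factorial : ℂ) *
                  (η : ℂ) ^ (-(k : ℤ)) := by
      rw [Finset.mul_sum]
      apply Finset.sum_congr rfl
      intro k _
      rw [zpow_neg, zpow_natCast]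
      ring
    rw [e]
    ring
  · filter_upwards [eventually_gt_atTop 0] with η hη
    rw [Real.rpow_neg hη.le, Real.rpow_natCast]
end

section
/- Let q ≥ 0 and η ∈ ℝ be fixed. Then for every integer N ≥ 1, as β → 0^+, F_q(η,β) − Σ_{n=0}^{N−1} (−1)^n ((−1/2)_n/n!) (β/2)^n F_{q+n}(η) = O(β^N); that is, there exist constants C > 0 and β_0 > 0 such that |F_q(η,β) − Σ_{n=0}^{N−1} (−1)^n ((−1/2)_n/n!) (β/2)^n F_{q+n}(η)| ≤ C β^N for all 0 < β ≤ β_0. -/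
open Real MeasureTheory Set Finset

noncomputable def cf (a : ℝ) (n : ℕ) : ℝ :=
  (-1 : ℝ) ^ n * ((ascPochhammer ℝ n).eval (-a) / n.factorial)

lemma cf_zero (a : ℝ) : cf a 0 = 1 := by simp [cf]

lemma cf_succ (a : ℝ) (n : ℕ) : cf a (n + 1) * (n + 1) = a * cf (a - 1) n := by
  have h1 : (n.factorial : ℝ) ≠ 0 := by positivity
  have h2 : (n : ℝ) + 1 ≠ 0 := by positivity
  have e : -(a - 1) = -a + 1 := by ring
  simp only [cf, ascPochhammer_succ_left, Polynomial.eval_mul, Polynomial.eval_X,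
    Polynomial.eval_comp, Polynomial.eval_add, Polynomial.eval_one, Nat.factorial_succ, e]
  push_cast
  field_simp
  ring

lemma key (N : ℕ) : ∀ a : ℝ, a ≤ N → ∃ K : ℝ, 0 ≤ K ∧ ∀ y : ℝ, 0 ≤ y →
    |(1 + y) ^ a - ∑ n ∈ Finset.range N, cf a n * y ^ n| ≤ K * y ^ N := by
  induction N with
  | zero =>
    intro a ha
    refine ⟨1, zero_le_one, fun y hy => ?_⟩
    simp only [Finset.range_zero, Finset.sum_empty, sub_zero, pow_zero, mul_one]
    rw [abs_of_nonneg (by positivity)]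
    exact Real.rpow_le_one_of_one_le_of_nonpos (by linarith) (by simpa using ha)
  | succ N ih =>
    intro a ha
    push_cast at ha
    obtain ⟨K, hK, h⟩ := ih (a - 1) (by linarith)
    refine ⟨|a| * K, by positivity, fun y hy => ?_⟩
    set g : ℝ → ℝ := fun y => (1 + y) ^ a - ∑ n ∈ Finset.range (N + 1), cf a n * y ^ n with hg
    have hd : ∀ x ∈ Icc (0 : ℝ) y, HasDerivWithinAt g
        (a * ((1 + x) ^ (a - 1) - ∑ n ∈ Finset.range N, cf (a - 1) n * x ^ n)) (Icc 0 y) x := by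
      intro x hx
      apply HasDerivAt.hasDerivWithinAt
      have hx0 : 0 < 1 + x := by linarith [hx.1]
      have d1 : HasDerivAt (fun y : ℝ => (1 + y) ^ a) (1 * a * (1 + x) ^ (a - 1)) x :=
        ((hasDerivAt_id x).const_add 1).rpow_const (Or.inl hx0.ne')
      have d2 : HasDerivAt (fun y : ℝ => ∑ n ∈ Finset.range (N + 1), cf a n * y ^ n)
          (∑ n ∈ Finset.range (N + 1), cf a n * (n * x ^ (n - 1))) x :=
        HasDerivAt.fun_sum fun n _ => (hasDerivAt_pow n x).const_mul _
      have d3 : HasDerivAt g _ x := d1.sub d2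
      refine d3.congr_deriv (Eq.symm ?_)
      rw [Finset.sum_range_succ', mul_sub, Finset.mul_sum]
      simp only [Nat.cast_zero, zero_mul, mul_zero, add_zero, one_mul]
      congr 1
      refine Finset.sum_congr rfl fun n _ => ?_
      have := cf_succ a n
      simp only [Nat.add_sub_cancel]
      push_cast
      linear_combination (-x ^ n) * this
    have hb : ∀ x ∈ Icc (0 : ℝ) y,
        ‖a * ((1 + x) ^ (a - 1) - ∑ n ∈ Finset.range N, cf (a - 1) n * x ^ n)‖
          ≤ |a| * (K * y ^ N) := by
      intro x hx
      rw [norm_mul, Real.norm_eq_abs, Real.norm_eq_abs]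
      gcongr
      refine (h x hx.1).trans ?_
      have := hx.1
      have := hx.2
      gcongr
    have hm := (convex_Icc (0 : ℝ) y).norm_image_sub_le_of_norm_hasDerivWithin_le hd hb
      (left_mem_Icc.2 hy) (right_mem_Icc.2 hy)
    have g0 : g 0 = 0 := by
      simp [hg, Finset.sum_range_succ', cf_zero]
    rw [g0, sub_zero, sub_zero, Real.norm_eq_abs, Real.norm_eq_abs, abs_of_nonneg hy] at hm
    calc _ ≤ _ := hm
      _ = _ := by ring

lemma int_std (s η : ℝ) (hs : 0 ≤ s) :
    IntegrableOn (fun x : ℝ => x ^ s / (Real.exp (x - η) + 1)) (Ioi 0) := by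
  have h := (Real.GammaIntegral_convergent (s := s + 1) (by linarith)).const_mul (Real.exp η)
  refine Integrable.mono' h ?_ ?_
  · apply Measurable.aestronglyMeasurable
    fun_prop
  · filter_upwards [ae_restrict_mem measurableSet_Ioi] with x hx
    have hx : 0 < x := hx
    rw [Real.norm_of_nonneg (by positivity), div_le_iff₀ (by positivity)]
    have e : Real.exp η * (Real.exp (-x) * x ^ (s + 1 - 1)) * (Real.exp (x - η) + 1)
        = x ^ s * (1 + Real.exp η * Real.exp (-x)) := by
      have : Real.exp η * Real.exp (-x) * Real.exp (x - η) = 1 := by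
        rw [← Real.exp_add, ← Real.exp_add, show η + -x + (x - η) = 0 by ring, Real.exp_zero]
      rw [add_sub_cancel_right]
      linear_combination x ^ s * this
    rw [e]
    have : 0 ≤ x ^ s := by positivity
    have : 0 ≤ x ^ s * (Real.exp η * Real.exp (-x)) := by positivity
    linarith

lemma int_rel (q η β : ℝ) (hq : 0 ≤ q) (hβ : 0 < β) :
    IntegrableOn (fun x : ℝ => x ^ q * Real.sqrt (1 + β * x / 2) / (Real.exp (x - η) + 1))
      (Ioi 0) := by
  have h := (int_std q η hq).add ((int_std (q + 1) η (by linarith)).const_mul (β / 2))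
  refine Integrable.mono' h ?_ ?_
  · apply Measurable.aestronglyMeasurable
    fun_prop
  · filter_upwards [ae_restrict_mem measurableSet_Ioi] with x hx
    have hx : 0 < x := hx
    rw [Real.norm_of_nonneg (by positivity)]
    have hs : Real.sqrt (1 + β * x / 2) ≤ 1 + β * x / 2 := by
      have : 0 < β * x := by positivity
      rw [Real.sqrt_le_left (by positivity)]
      nlinarith
    calc _ ≤ x ^ q * (1 + β * x / 2) / (Real.exp (x - η) + 1) := by gcongr
      _ = _ := by
        simp only [Pi.add_apply]
        rw [Real.rpow_add_one hx.ne']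
        ring

theorem stmt10 (q η : ℝ) (hq : 0 ≤ q) (N : ℕ) (hN : 1 ≤ N) :
    ∃ C > (0 : ℝ), ∃ β₀ > (0 : ℝ), ∀ β : ℝ, 0 < β → β ≤ β₀ →
      |Frel q η β - ∑ n ∈ Finset.range N,
          (-1 : ℝ) ^ n * ((ascPochhammer ℝ n).eval (-1 / 2 : ℝ) / n.factorial) *
            (β / 2) ^ n * Fstd (q + n) η| ≤ C * β ^ N := by
  have hN' : (1 : ℝ) ≤ N := by exact_mod_cast hN
  obtain ⟨K, hK, hk⟩ := key N (1 / 2) (by linarith)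
  have hF : 0 ≤ Fstd (q + N) η := by
    refine setIntegral_nonneg measurableSet_Ioi fun x hx => ?_
    have hx : 0 < x := hx
    positivity
  refine ⟨K * Fstd (q + N) η + 1, by positivity, 1, one_pos, fun β hβ _ => ?_⟩
  have hi : ∀ n : ℕ, IntegrableOn
      (fun x : ℝ => x ^ (q + n) / (Real.exp (x - η) + 1)) (Ioi 0) :=
    fun n => int_std _ _ (by positivity)
  have e : Frel q η β - ∑ n ∈ Finset.range N,
          (-1 : ℝ) ^ n * ((ascPochhammer ℝ n).eval (-1 / 2 : ℝ) / n.factorial) *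
            (β / 2) ^ n * Fstd (q + n) η
      = ∫ x in Ioi (0 : ℝ), (x ^ q * Real.sqrt (1 + β * x / 2) / (Real.exp (x - η) + 1)
        - ∑ n ∈ Finset.range N, cf (1 / 2) n * (β / 2) ^ n *
          (x ^ (q + n) / (Real.exp (x - η) + 1))) := by
    rw [integral_sub (int_rel q η β hq hβ)
      (integrable_finsetSum _ fun n _ => (hi n).const_mul _),
      integral_finsetSum _ fun n _ => (hi n).const_mul _]
    simp only [integral_const_mul, Frel, Fstd, cf, neg_div]
  rw [e, ← Real.norm_eq_abs]
  refine (norm_integral_le_of_norm_le ((hi N).const_mul (K * (β / 2) ^ N)) ?_).trans ?_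
  · filter_upwards [ae_restrict_mem measurableSet_Ioi] with x hx
    have hx : 0 < x := hx
    have h1 := hk (β / 2 * x) (by positivity)
    have e2 : x ^ q * Real.sqrt (1 + β * x / 2) / (Real.exp (x - η) + 1)
        - ∑ n ∈ Finset.range N, cf (1 / 2) n * (β / 2) ^ n *
          (x ^ (q + n) / (Real.exp (x - η) + 1))
        = x ^ q / (Real.exp (x - η) + 1) * ((1 + β / 2 * x) ^ (1 / 2 : ℝ) -
          ∑ n ∈ Finset.range N, cf (1 / 2) n * (β / 2 * x) ^ n) := by
      rw [mul_sub, Finset.mul_sum, Real.sqrt_eq_rpow]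
      congr 1
      · rw [show β * x / 2 = β / 2 * x by ring]; ring
      · refine Finset.sum_congr rfl fun n _ => ?_
        rw [Real.rpow_add_natCast hx.ne', mul_pow]
        ring
    rw [e2, norm_mul, Real.norm_of_nonneg (by positivity), Real.norm_eq_abs]
    calc _ ≤ x ^ q / (Real.exp (x - η) + 1) * (K * (β / 2 * x) ^ N) := by gcongr
      _ = _ := by
        rw [Real.rpow_add_natCast hx.ne', mul_pow]
        ring
  · rw [integral_const_mul]
    change K * (β / 2) ^ N * Fstd (q + N) η ≤ _
    have h2 : (β / 2) ^ N ≤ β ^ N := by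
      gcongr
      linarith
    calc _ = K * Fstd (q + N) η * (β / 2) ^ N := by ring
      _ ≤ K * Fstd (q + N) η * β ^ N := by gcongr
      _ ≤ _ := by
        have : 0 < β ^ N := by positivity
        linarith
end

section
/- Let m ≥ 2 be an integer, let η ∈ ℝ be fixed, and let 0 < c < 1. Define A_m = (−1)^{m+1}/(m! Γ(−1/2)), F_q^{(P)}(η,β) = (A_m/(2π)) ∫_{-∞}^∞ e^{η(c+it)} Log(c+it) (π/sin(π(c+it))) M(m−1/2; m+1; 2(c+it)/β) dt (principal branch of the logarithm), Ψ_k(η) = (1/2) ∫_{-∞}^∞ Log(c+it) e^{η(c+it)} (c+it)^k / sin(π(c+it)) dt, and P̃_{m,k} = 2^k (m−1/2)_k/(k! (m+1)_k). Then for every integer N ≥ 1, as β → +∞, F_q^{(P)}(η,β) − A_m Σ_{k=0}^{N−1} P̃_{m,k} β^{−k} Ψ_k(η) = O(β^{−N}). -/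
open Real MeasureTheory Set Finset Filter Asymptotics

/-- Kummer's confluent hypergeometric function `M(a;b;z)` as a power series. -/
noncomputable def kummerM (a b z : ℂ) : ℂ :=
  ∑' k : ℕ, (ascPochhammer ℂ k).eval a /
      ((ascPochhammer ℂ k).eval b * (k.factorial : ℂ)) * z ^ k

/-- The function `F_q^{(P)}(η,β)` (principal branch of the complex logarithm). -/
noncomputable def FP (m : ℕ) (c η β : ℝ) : ℂ :=
  (((Acoef m : ℝ) : ℂ) / (2 * (π : ℂ))) * ∫ t : ℝ,
    Complex.exp ((η : ℂ) * ((c : ℂ) + t * Complex.I)) *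
      Complex.log ((c : ℂ) + t * Complex.I) *
      ((π : ℂ) / Complex.sin ((π : ℂ) * ((c : ℂ) + t * Complex.I))) *
      kummerM ((m : ℂ) - 1 / 2) ((m : ℂ) + 1)
        (2 * ((c : ℂ) + t * Complex.I) / (β : ℂ))

/-- The auxiliary function `Ψ_k(η)`. -/
noncomputable def Psi (c : ℝ) (k : ℕ) (η : ℝ) : ℂ :=
  (1 / 2 : ℂ) * ∫ t : ℝ, Complex.log ((c : ℂ) + t * Complex.I) *
      Complex.exp ((η : ℂ) * ((c : ℂ) + t * Complex.I)) *
      ((c : ℂ) + t * Complex.I) ^ k / Complex.sin ((π : ℂ) * ((c : ℂ) + t * Complex.I))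

/-- `P̃_{m,k} = 2^k (m−1/2)_k/(k! (m+1)_k)`. -/
noncomputable def Ptilde (m k : ℕ) : ℝ :=
  2 ^ k * (ascPochhammer ℝ k).eval ((m : ℝ) - 1 / 2) /
    (k.factorial * (ascPochhammer ℝ k).eval ((m : ℝ) + 1))

/-- coefficients of the Kummer series -/
noncomputable def kco (m k : ℕ) : ℂ :=
  (ascPochhammer ℂ k).eval ((m : ℂ) - 1 / 2) /
      ((ascPochhammer ℂ k).eval ((m : ℂ) + 1) * (k.factorial : ℂ))

lemma kco_real (m k : ℕ) : kco m k * 2 ^ k = ((Ptilde m k : ℝ) : ℂ) := by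
  have h1 : (ascPochhammer ℂ k).eval ((m : ℂ) - 1 / 2) =
      (((ascPochhammer ℝ k).eval ((m : ℝ) - 1 / 2) : ℝ) : ℂ) := by
    have := Polynomial.eval₂_at_apply (p := ascPochhammer ℝ k) Complex.ofRealHom ((m : ℝ) - 1 / 2)
    rw [← Polynomial.eval_map, ascPochhammer_map] at this
    simpa using this
  have h2 : (ascPochhammer ℂ k).eval ((m : ℂ) + 1) =
      (((ascPochhammer ℝ k).eval ((m : ℝ) + 1) : ℝ) : ℂ) := by
    have := Polynomial.eval₂_at_apply (p := ascPochhammer ℝ k) Complex.ofRealHom ((m : ℝ) + 1)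
    rw [← Polynomial.eval_map, ascPochhammer_map] at this
    simpa using this
  unfold kco Ptilde
  rw [h1, h2]
  push_cast
  ring

lemma poch_bd (m : ℕ) (hm : 2 ≤ m) (k : ℕ) :
    0 ≤ (ascPochhammer ℝ k).eval ((m : ℝ) - 1 / 2) ∧
    (ascPochhammer ℝ k).eval ((m : ℝ) - 1 / 2) ≤ (ascPochhammer ℝ k).eval ((m : ℝ) + 1) ∧
    0 < (ascPochhammer ℝ k).eval ((m : ℝ) + 1) := by
  have hm' : (2 : ℝ) ≤ m := by exact_mod_cast hm
  induction k with
  | zero => simp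
  | succ k ih =>
    obtain ⟨h0, h1, h2⟩ := ih
    have hk : (0 : ℝ) ≤ k := by positivity
    simp only [ascPochhammer_succ_eval]
    refine ⟨mul_nonneg h0 (by linarith), ?_, mul_pos h2 (by linarith)⟩
    exact mul_le_mul h1 (by linarith) (by linarith) h2.le

lemma kco_norm (m : ℕ) (hm : 2 ≤ m) (k : ℕ) : ‖kco m k‖ ≤ 1 / (k.factorial : ℝ) := by
  obtain ⟨h0, h1, h2⟩ := poch_bd m hm k
  have h : kco m k = ((Ptilde m k / 2 ^ k : ℝ) : ℂ) := by
    push_cast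
    rw [← kco_real]; field_simp
  have hf : (0 : ℝ) < k.factorial := by positivity
  have e : Ptilde m k / 2 ^ k = ((ascPochhammer ℝ k).eval ((m : ℝ) - 1 / 2) /
      (ascPochhammer ℝ k).eval ((m : ℝ) + 1)) / k.factorial := by
    unfold Ptilde; field_simp
  rw [h, Complex.norm_real, e, Real.norm_of_nonneg (by positivity)]
  gcongr
  exact (div_le_one h2).2 h1

lemma kummer_summable (m : ℕ) (hm : 2 ≤ m) (z : ℂ) : Summable (fun k => kco m k * z ^ k) := by
  refine Summable.of_norm_bounded (Real.summable_pow_div_factorial ‖z‖) fun k => ?_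
  rw [norm_mul, norm_pow]
  calc _ ≤ 1 / (k.factorial : ℝ) * ‖z‖ ^ k := by gcongr; exact kco_norm m hm k
    _ = _ := by ring

lemma kummer_eq (m : ℕ) (z : ℂ) :
    kummerM ((m : ℂ) - 1 / 2) ((m : ℂ) + 1) z = ∑' k, kco m k * z ^ k := rfl

lemma kummer_rem (m : ℕ) (hm : 2 ≤ m) (N : ℕ) (z : ℂ) :
    ‖kummerM ((m : ℂ) - 1 / 2) ((m : ℂ) + 1) z - ∑ k ∈ Finset.range N, kco m k * z ^ k‖
      ≤ ‖z‖ ^ N * Real.exp ‖z‖ := by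
  rw [kummer_eq, ← (kummer_summable m hm z).sum_add_tsum_nat_add N, add_sub_cancel_left]
  have hs : HasSum (fun k : ℕ => ‖z‖ ^ N * (‖z‖ ^ k / k.factorial)) (‖z‖ ^ N * Real.exp ‖z‖) := by
    apply HasSum.mul_left
    rw [Real.exp_eq_exp_ℝ]
    exact NormedSpace.expSeries_div_hasSum_exp ‖z‖
  refine tsum_of_norm_bounded hs fun k => ?_
  rw [norm_mul, norm_pow]
  calc _ ≤ 1 / ((k + N).factorial : ℝ) * ‖z‖ ^ (k + N) := by gcongr; exact kco_norm m hm _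
    _ ≤ 1 / (k.factorial : ℝ) * ‖z‖ ^ (k + N) := by
        gcongr; omega
    _ = _ := by rw [pow_add]; ring

lemma kummer_meas (m : ℕ) (hm : 2 ≤ m) :
    Measurable (fun z : ℂ => kummerM ((m : ℂ) - 1 / 2) ((m : ℂ) + 1) z) := by
  refine measurable_of_tendsto_metrizable
    (f := fun (n : ℕ) (z : ℂ) => ∑ k ∈ Finset.range n, kco m k * z ^ k) (fun n => by fun_prop) ?_
  rw [tendsto_pi_nhds]
  intro z
  exact (kummer_summable m hm z).hasSum.tendsto_sum_nat

/-- point on the contour -/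
noncomputable def sp (c t : ℝ) : ℂ := (c : ℂ) + t * Complex.I

/-- core integrand -/
noncomputable def GG (c η t : ℝ) : ℂ :=
  Complex.exp ((η : ℂ) * sp c t) * Complex.log (sp c t) / Complex.sin ((π : ℂ) * sp c t)

lemma sp_meas (c : ℝ) : Measurable (sp c) := by unfold sp; fun_prop

lemma GG_meas (c η : ℝ) : Measurable (GG c η) := by
  have := sp_meas c
  unfold GG
  refine Measurable.div ?_ ?_
  · exact (Complex.measurable_exp.comp (this.const_mul _)).mul
      (Complex.measurable_log.comp this)
  · exact Complex.measurable_sin.comp (this.const_mul _)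

lemma sin_lb (c t : ℝ) (hc0 : 0 < c) (hc1 : c < 1) :
    Real.sin (π * c) / 2 * Real.exp (π * |t|) ≤ ‖Complex.sin ((π : ℂ) * sp c t)‖ := by
  have hs : 0 < Real.sin (π * c) :=
    Real.sin_pos_of_pos_of_lt_pi (by positivity) (by nlinarith [Real.pi_pos])
  refine le_trans ?_ (Complex.abs_re_le_norm _)
  have e : (π : ℂ) * sp c t = ((π * c : ℝ) : ℂ) + ((π * t : ℝ) : ℂ) * Complex.I := by
    unfold sp; push_cast; ring
  have e2 : (Complex.sin ((π : ℂ) * sp c t)).re = Real.sin (π * c) * Real.cosh (π * t) := by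
    rw [e, Complex.sin_add_mul_I, ← Complex.ofReal_sin, ← Complex.ofReal_cosh,
      ← Complex.ofReal_cos, ← Complex.ofReal_sinh]
    generalize Real.sin (π * c) = u
    generalize Real.cosh (π * t) = v
    generalize Real.cos (π * c) = w
    generalize Real.sinh (π * t) = x
    simp
  rw [e2, abs_of_pos (mul_pos hs (Real.cosh_pos _)), ← Real.cosh_abs, abs_mul,
    abs_of_pos Real.pi_pos, Real.cosh_eq]
  have := Real.exp_pos (-(π * |t|))
  nlinarith [mul_pos hs this]

lemma sp_norm_le (c t : ℝ) (hc0 : 0 < c) (hc1 : c < 1) : ‖sp c t‖ ≤ 1 + |t| := by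
  unfold sp
  refine (norm_add_le _ _).trans ?_
  simp [abs_of_pos hc0, hc1.le]

lemma le_sp_norm (c t : ℝ) (hc0 : 0 < c) : c ≤ ‖sp c t‖ := by
  have := Complex.abs_re_le_norm (sp c t)
  simpa [sp, abs_of_pos hc0] using this

lemma log_bd (c t : ℝ) (hc0 : 0 < c) :
    ‖Complex.log (sp c t)‖ ≤ (1 / c + π + 2) * Real.exp (‖sp c t‖ / 2) := by
  have hr := le_sp_norm c t hc0
  set r := ‖sp c t‖ with hrd
  have hr0 : 0 < r := hc0.trans_le hr
  have h1 : ‖Complex.log (sp c t)‖ ≤ |Real.log r| + π := by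
    refine (Complex.norm_le_abs_re_add_abs_im _).trans ?_
    rw [Complex.log_re, Complex.log_im]
    gcongr
    exact Complex.abs_arg_le_pi _
  have h2 : |Real.log r| ≤ r + 1 / c := by
    have h3 : 1 / r ≤ 1 / c := by gcongr
    have h4 := Real.log_le_sub_one_of_pos hr0
    have h5 := Real.one_sub_inv_le_log_of_pos hr0
    rw [inv_eq_one_div] at h5
    have : 0 < 1 / c := by positivity
    rw [abs_le]; constructor <;> linarith
  have h6 := Real.add_one_le_exp (r / 2)
  have h7 : 0 < 1 / c := by positivity
  have := Real.pi_pos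
  have h8 : (1 / c + π) * 1 ≤ (1 / c + π) * Real.exp (r / 2) := by
    gcongr
    linarith
  nlinarith

lemma exp_integrable : Integrable (fun t : ℝ => Real.exp (-(1 / 2) * |t|)) := by
  apply Integrable.of_integral_ne_zero
  rw [integral_comp_abs (f := fun x => Real.exp (-(1 / 2) * x)),
    integral_exp_mul_Ioi (a := -(1 / 2)) (by norm_num) 0]
  norm_num

lemma dom_int (c η : ℝ) (hc0 : 0 < c) (hc1 : c < 1) :
    Integrable (fun t => ‖GG c η t‖ * Real.exp (2 * ‖sp c t‖)) := by
  have hs : 0 < Real.sin (π * c) :=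
    Real.sin_pos_of_pos_of_lt_pi (by positivity) (by nlinarith [Real.pi_pos])
  set K : ℝ := Real.exp (η * c) * (1 / c + π + 2) / (Real.sin (π * c) / 2) * Real.exp (5 / 2)
  refine Integrable.mono' (exp_integrable.const_mul K) ?_ ?_
  · have h1 := GG_meas c η
    have h2 := sp_meas c
    exact (h1.norm.mul (Real.measurable_exp.comp (h2.norm.const_mul 2))).aestronglyMeasurable
  · refine Eventually.of_forall fun t => ?_
    rw [Real.norm_of_nonneg (by positivity)]
    have h1 : ‖GG c η t‖ ≤ Real.exp (η * c) * ((1 / c + π + 2) * Real.exp (‖sp c t‖ / 2)) /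
        (Real.sin (π * c) / 2 * Real.exp (π * |t|)) := by
      unfold GG
      rw [norm_div, norm_mul]
      have e1 : ‖Complex.exp ((η : ℂ) * sp c t)‖ = Real.exp (η * c) := by
        rw [Complex.norm_exp]; simp [sp]
      rw [e1]
      gcongr
      · exact log_bd c t hc0
      · exact sin_lb c t hc0 hc1
    have hpi := Real.pi_pos
    calc _ ≤ Real.exp (η * c) * ((1 / c + π + 2) * Real.exp (‖sp c t‖ / 2)) /
        (Real.sin (π * c) / 2 * Real.exp (π * |t|)) * Real.exp (2 * ‖sp c t‖) := by gcongr
      _ = Real.exp (η * c) * (1 / c + π + 2) / (Real.sin (π * c) / 2) *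
          Real.exp (‖sp c t‖ / 2 + 2 * ‖sp c t‖ - π * |t|) := by
          rw [Real.exp_sub, Real.exp_add]; field_simp
      _ ≤ Real.exp (η * c) * (1 / c + π + 2) / (Real.sin (π * c) / 2) *
          Real.exp (5 / 2 + -(1 / 2) * |t|) := by
          gcongr
          have := sp_norm_le c t hc0 hc1
          nlinarith [Real.pi_gt_three, abs_nonneg t]
      _ = _ := by rw [Real.exp_add]; simp only [K]; ring

lemma pow_bd (x : ℝ) (hx : 0 ≤ x) (k : ℕ) : x ^ k ≤ k.factorial * Real.exp x := by
  have := Real.pow_div_factorial_le_exp x hx k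
  rwa [div_le_iff₀' (by positivity)] at this

lemma int_pow (c η : ℝ) (hc0 : 0 < c) (hc1 : c < 1) (k : ℕ) :
    Integrable (fun t => GG c η t * sp c t ^ k) := by
  refine Integrable.mono' ((dom_int c η hc0 hc1).const_mul (k.factorial : ℝ)) ?_ ?_
  · exact ((GG_meas c η).mul ((sp_meas c).pow_const k)).aestronglyMeasurable
  · refine Eventually.of_forall fun t => ?_
    rw [norm_mul, norm_pow]
    have h := pow_bd _ (norm_nonneg (sp c t)) k
    have h2 : Real.exp ‖sp c t‖ ≤ Real.exp (2 * ‖sp c t‖) := by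
      gcongr; linarith [norm_nonneg (sp c t)]
    calc _ ≤ ‖GG c η t‖ * (k.factorial * Real.exp (2 * ‖sp c t‖)) := by
          gcongr
          exact h.trans (by gcongr)
      _ = _ := by ring

lemma znorm (c t β : ℝ) (hβ : 2 ≤ β) : ‖2 * sp c t / (β : ℂ)‖ = 2 * ‖sp c t‖ / β := by
  rw [norm_div, norm_mul, Complex.norm_real, Real.norm_of_nonneg (by linarith)]
  simp

lemma rem_bd (m : ℕ) (hm : 2 ≤ m) (c η : ℝ) (N : ℕ) (β t : ℝ) (hβ : 2 ≤ β) :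
    ‖GG c η t * (kummerM ((m : ℂ) - 1 / 2) ((m : ℂ) + 1) (2 * sp c t / (β : ℂ)) -
      ∑ k ∈ Finset.range N, kco m k * (2 * sp c t / (β : ℂ)) ^ k)‖ ≤
      2 ^ N * N.factorial * (β ^ N)⁻¹ * (‖GG c η t‖ * Real.exp (2 * ‖sp c t‖)) := by
  have hβ0 : 0 < β := by linarith
  rw [norm_mul]
  have h := kummer_rem m hm N (2 * sp c t / (β : ℂ))
  rw [znorm c t β hβ] at h
  have h1 : Real.exp (2 * ‖sp c t‖ / β) ≤ Real.exp ‖sp c t‖ := by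
    gcongr
    rw [div_le_iff₀ hβ0]
    nlinarith [norm_nonneg (sp c t)]
  have h2 := pow_bd _ (norm_nonneg (sp c t)) N
  calc _ ≤ ‖GG c η t‖ * ((2 * ‖sp c t‖ / β) ^ N * Real.exp (2 * ‖sp c t‖ / β)) := by gcongr
    _ ≤ ‖GG c η t‖ * ((2 * ‖sp c t‖ / β) ^ N * Real.exp ‖sp c t‖) := by gcongr
    _ = ‖GG c η t‖ * (2 ^ N * (β ^ N)⁻¹ * ‖sp c t‖ ^ N * Real.exp ‖sp c t‖) := by
        rw [div_pow, mul_pow]; ring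
    _ ≤ ‖GG c η t‖ * (2 ^ N * (β ^ N)⁻¹ * (N.factorial * Real.exp ‖sp c t‖) *
          Real.exp ‖sp c t‖) := by gcongr
    _ = _ := by rw [two_mul ‖sp c t‖, Real.exp_add]; ring

lemma int_kummer (m : ℕ) (hm : 2 ≤ m) (c η : ℝ) (hc0 : 0 < c) (hc1 : c < 1) (β : ℝ)
    (hβ : 2 ≤ β) :
    Integrable (fun t => GG c η t *
      kummerM ((m : ℂ) - 1 / 2) ((m : ℂ) + 1) (2 * sp c t / (β : ℂ))) := by
  refine Integrable.mono' (dom_int c η hc0 hc1) ?_ ?_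
  · exact ((GG_meas c η).mul ((kummer_meas m hm).comp
      (((sp_meas c).const_mul 2).div_const _))).aestronglyMeasurable
  · refine Eventually.of_forall fun t => ?_
    have := rem_bd m hm c η 0 β t hβ
    simpa using this

lemma FP_eq (m : ℕ) (c η β : ℝ) : FP m c η β = ((Acoef m : ℝ) : ℂ) / 2 * ∫ t : ℝ,
    GG c η t * kummerM ((m : ℂ) - 1 / 2) ((m : ℂ) + 1) (2 * sp c t / (β : ℂ)) := by
  have hpi : (π : ℂ) ≠ 0 := by exact_mod_cast Real.pi_ne_zero
  have e : ((Acoef m : ℝ) : ℂ) / 2 = ((Acoef m : ℝ) : ℂ) / (2 * (π : ℂ)) * π := by field_simp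
  rw [e, mul_assoc, ← integral_const_mul]
  unfold FP
  congr 2
  funext t
  unfold GG sp
  ring

lemma Psi_eq (c η : ℝ) (k : ℕ) : Psi c k η = 1 / 2 * ∫ t : ℝ, GG c η t * sp c t ^ k := by
  unfold Psi
  congr 2
  funext t
  unfold GG sp
  ring

lemma main_eq (m : ℕ) (hm : 2 ≤ m) (c η : ℝ) (hc0 : 0 < c) (hc1 : c < 1) (N : ℕ) (β : ℝ)
    (hβ : 2 ≤ β) :
    FP m c η β - ((Acoef m : ℝ) : ℂ) * ∑ k ∈ Finset.range N,
            ((Ptilde m k : ℝ) : ℂ) * (β : ℂ) ^ (-(k : ℤ)) * Psi c k η =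
    ((Acoef m : ℝ) : ℂ) / 2 * ∫ t : ℝ, GG c η t *
      (kummerM ((m : ℂ) - 1 / 2) ((m : ℂ) + 1) (2 * sp c t / (β : ℂ)) -
      ∑ k ∈ Finset.range N, kco m k * (2 * sp c t / (β : ℂ)) ^ k) := by
  have e1 : ∀ t : ℝ, GG c η t *
      (kummerM ((m : ℂ) - 1 / 2) ((m : ℂ) + 1) (2 * sp c t / (β : ℂ)) -
      ∑ k ∈ Finset.range N, kco m k * (2 * sp c t / (β : ℂ)) ^ k) =
      GG c η t * kummerM ((m : ℂ) - 1 / 2) ((m : ℂ) + 1) (2 * sp c t / (β : ℂ)) -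
      ∑ k ∈ Finset.range N, (((Ptilde m k : ℝ) : ℂ) * (β : ℂ) ^ (-(k : ℤ))) *
        (GG c η t * sp c t ^ k) := by
    intro t
    rw [mul_sub, Finset.mul_sum]
    congr 1
    refine Finset.sum_congr rfl fun k _ => ?_
    rw [← kco_real, zpow_neg, zpow_natCast, div_pow, mul_pow]
    ring
  simp_rw [e1]
  rw [integral_sub (int_kummer m hm c η hc0 hc1 β hβ)
    (integrable_finsetSum _ fun k _ => (int_pow c η hc0 hc1 k).const_mul _),
    integral_finsetSum _ fun k _ => (int_pow c η hc0 hc1 k).const_mul _, mul_sub, FP_eq]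
  congr 1
  rw [Finset.mul_sum, Finset.mul_sum]
  refine Finset.sum_congr rfl fun k _ => ?_
  rw [integral_const_mul, Psi_eq]
  ring

theorem stmt13 (m : ℕ) (hm : 2 ≤ m) (c η : ℝ) (hc0 : 0 < c) (hc1 : c < 1) :
    ∀ N : ℕ, 1 ≤ N →
      (fun β : ℝ => FP m c η β -
          ((Acoef m : ℝ) : ℂ) * ∑ k ∈ Finset.range N,
            ((Ptilde m k : ℝ) : ℂ) * (β : ℂ) ^ (-(k : ℤ)) * Psi c k η) =O[atTop]
        (fun β : ℝ => β ^ (-(N : ℝ))) := by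
  intro N _
  refine IsBigO.of_bound (‖((Acoef m : ℝ) : ℂ) / 2‖ * (2 ^ N * N.factorial *
    ∫ t, ‖GG c η t‖ * Real.exp (2 * ‖sp c t‖))) ?_
  filter_upwards [eventually_ge_atTop (2 : ℝ)] with β hβ
  have hβ0 : 0 < β := by linarith
  rw [main_eq m hm c η hc0 hc1 N β hβ, norm_mul, mul_assoc]
  refine mul_le_mul_of_nonneg_left ?_ (norm_nonneg _)
  refine (norm_integral_le_of_norm_le ((dom_int c η hc0 hc1).const_mul
    (2 ^ N * N.factorial * (β ^ N)⁻¹))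
    (Eventually.of_forall fun t => rem_bd m hm c η N β t hβ)).trans (le_of_eq ?_)
  rw [integral_const_mul, Real.rpow_neg hβ0.le, Real.rpow_natCast,
    Real.norm_of_nonneg (by positivity)]
  ring
end

section
/- Let 0 < c < 1 and η ∈ ℝ. Then (1/2) ∫_{-∞}^∞ e^{η(c+it)} / sin(π(c+it)) dt = 1/(e^{−η}+1). -/
open Real MeasureTheory Complex

/-- The substitution `u = x / (1 + x)` turns the Beta integrand into `x^(s-1) / (1+x)`. -/
lemma aux_integrand (s : ℂ) {x : ℝ} (hx : 0 < x) :
    |1 / (1 + x) ^ 2| • (((x / (1 + x) : ℝ) : ℂ) ^ (s - 1) *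
      (1 - ((x / (1 + x) : ℝ) : ℂ)) ^ ((1 - s) - 1)) =
    (x : ℂ) ^ (s - 1) • ((1 / (1 + x) : ℝ) : ℂ) := by
  have h1 : (0 : ℝ) < 1 + x := by linarith
  have h1' : ((1 + x : ℝ) : ℂ) ≠ 0 := by exact_mod_cast h1.ne'
  have e1 : (1 - ((x / (1 + x) : ℝ) : ℂ)) = (((1 + x : ℝ)) : ℂ)⁻¹ := by
    rw [← ofReal_inv, ← ofReal_one, ← ofReal_sub]
    congr 1
    field_simp
    ring
  have e2 : (1 - s) - 1 = -s := by ring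
  rw [e1, e2, inv_cpow_ofReal_nonneg h1.le, cpow_neg, inv_inv, ofReal_div,
    div_cpow_ofReal_nonneg hx.le h1.le, cpow_sub _ _ h1', cpow_one,
    abs_of_pos (by positivity)]
  have h2 : ((1 + x : ℝ) : ℂ) ^ s ≠ 0 := by
    rw [Ne, cpow_eq_zero_iff]; tauto
  simp only [real_smul, smul_eq_mul, ofReal_div, ofReal_pow, ofReal_one]
  field_simp

lemma aux_image : (fun x : ℝ => x / (1 + x)) '' Set.Ioi 0 = Set.Ioo 0 1 := by
  ext u
  constructor
  · rintro ⟨x, hx, rfl⟩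
    have hx : 0 < x := hx
    have h1 : (0 : ℝ) < 1 + x := by linarith
    exact ⟨by positivity, by rw [div_lt_one h1]; linarith⟩
  · rintro ⟨h0, h1⟩
    have h2 : 0 < 1 - u := by linarith
    refine ⟨u / (1 - u), div_pos h0 h2, ?_⟩
    simp only
    field_simp
    ring

lemma aux_deriv : ∀ x ∈ Set.Ioi (0 : ℝ),
    HasDerivWithinAt (fun x : ℝ => x / (1 + x)) (1 / (1 + x) ^ 2) (Set.Ioi 0) x := by
  intro x hx
  have hx : 0 < x := hx
  have h := (hasDerivAt_id x).div ((hasDerivAt_id x).const_add 1)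
    (by simp only [id]; linarith)
  refine (HasDerivAt.congr_deriv h ?_).hasDerivWithinAt
  simp

lemma aux_inj : Set.InjOn (fun x : ℝ => x / (1 + x)) (Set.Ioi 0) := by
  intro x hx y hy h
  have hx : 0 < x := hx
  have hy : 0 < y := hy
  simp only at h
  rw [div_eq_div_iff (by linarith) (by linarith)] at h
  linarith

lemma aux_conv {s : ℂ} (h0 : 0 < s.re) (h1 : s.re < 1) :
    MellinConvergent (fun x : ℝ => ((1 / (1 + x) : ℝ) : ℂ)) s := by
  have h := betaIntegral_convergent (u := s) (v := 1 - s) h0 (by simpa using h1)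
  rw [intervalIntegrable_iff_integrableOn_Ioo_of_le zero_le_one, ← aux_image,
    integrableOn_image_iff_integrableOn_abs_deriv_smul measurableSet_Ioi aux_deriv aux_inj] at h
  exact h.congr_fun (fun x hx => aux_integrand s hx) measurableSet_Ioi

lemma aux_mellin {s : ℂ} (h0 : 0 < s.re) (h1 : s.re < 1) :
    mellin (fun x : ℝ => ((1 / (1 + x) : ℝ) : ℂ)) s = π / Complex.sin (π * s) := by
  have h := Gamma_mul_Gamma_eq_betaIntegral (s := s) (t := 1 - s) h0 (by simpa using h1)
  rw [Complex.Gamma_mul_Gamma_one_sub, add_sub_cancel, Complex.Gamma_one, one_mul] at h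
  rw [h, betaIntegral, intervalIntegral.integral_of_le zero_le_one, integral_Ioc_eq_integral_Ioo,
    ← aux_image, integral_image_eq_integral_abs_deriv_smul measurableSet_Ioi aux_deriv aux_inj]
  exact (setIntegral_congr_fun measurableSet_Ioi (fun x hx => aux_integrand s hx)).symm

lemma aux_cosh (t : ℝ) : 1 + t ^ 2 ≤ Real.cosh (π * t) := by
  have h1 := Real.quadratic_le_exp_of_nonneg (abs_nonneg (π * t))
  have h2 := Real.add_one_le_exp (-|π * t|)
  rw [← Real.cosh_abs, Real.cosh_eq]
  rw [sq_abs] at h1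
  have h3 : 4 ≤ π ^ 2 := by nlinarith [Real.pi_gt_three]
  nlinarith [mul_le_mul_of_nonneg_right h3 (sq_nonneg t)]

lemma aux_sin (c t : ℝ) (hc0 : 0 < c) (hc1 : c < 1) :
    Real.sin (π * c) * (1 + t ^ 2) ≤ ‖Complex.sin ((π : ℂ) * ((c : ℂ) + t * Complex.I))‖ := by
  have hs : 0 < Real.sin (π * c) :=
    Real.sin_pos_of_pos_of_lt_pi (by positivity) (by nlinarith [Real.pi_pos])
  have e : (Complex.sin ((π : ℂ) * ((c : ℂ) + t * Complex.I))).re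
      = Real.sin (π * c) * Real.cosh (π * t) := by
    have : (π : ℂ) * ((c : ℂ) + t * Complex.I)
        = ((π * c : ℝ) : ℂ) + ((π * t : ℝ) : ℂ) * Complex.I := by push_cast; ring
    rw [this, Complex.sin_add_mul_I, ← ofReal_sin, ← ofReal_cos, ← ofReal_cosh, ← ofReal_sinh]
    simp [-ofReal_sin, -ofReal_cos, -ofReal_cosh, -ofReal_sinh]
  calc _ ≤ Real.sin (π * c) * Real.cosh (π * t) :=
        mul_le_mul_of_nonneg_left (aux_cosh t) hs.le
    _ ≤ _ := by rw [← e]; exact Complex.re_le_norm _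

lemma aux_vert (c : ℝ) (hc0 : 0 < c) (hc1 : c < 1) :
    Integrable (fun t : ℝ => (π : ℂ) / Complex.sin ((π : ℂ) * ((c : ℂ) + t * Complex.I))) := by
  have hs : 0 < Real.sin (π * c) :=
    Real.sin_pos_of_pos_of_lt_pi (by positivity) (by nlinarith [Real.pi_pos])
  refine (integrable_inv_one_add_sq.const_mul (π / Real.sin (π * c))).mono' ?_ ?_
  · exact (Measurable.aestronglyMeasurable (by fun_prop))
  · refine Filter.Eventually.of_forall fun t => ?_
    rw [norm_div, Complex.norm_real, Real.norm_of_nonneg Real.pi_pos.le, ← div_eq_mul_inv, div_div]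
    exact div_le_div_of_nonneg_left Real.pi_pos.le (by positivity) (aux_sin c t hc0 hc1)

theorem stmt15 (c η : ℝ) (hc0 : 0 < c) (hc1 : c < 1) :
    (1 / 2 : ℂ) * ∫ t : ℝ, Complex.exp ((η : ℂ) * ((c : ℂ) + t * Complex.I)) /
        Complex.sin ((π : ℂ) * ((c : ℂ) + t * Complex.I)) =
      ((1 / (Real.exp (-η) + 1) : ℝ) : ℂ) := by
  have hm : ∀ t : ℝ, mellin (fun x : ℝ => ((1 / (1 + x) : ℝ) : ℂ)) ((c : ℂ) + t * Complex.I)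
      = π / Complex.sin ((π : ℂ) * ((c : ℂ) + t * Complex.I)) := fun t =>
    aux_mellin (by simpa using hc0) (by simpa using hc1)
  have hx : 0 < Real.exp (-η) := Real.exp_pos _
  have key := mellinInv_mellin_eq c (fun x : ℝ => ((1 / (1 + x) : ℝ) : ℂ)) hx
    (aux_conv (by simpa using hc0) (by simpa using hc1))
    (by
      unfold VerticalIntegrable
      simp only [hm]
      exact aux_vert c hc0 hc1)
    (by
      refine Complex.continuous_ofReal.continuousAt.comp ?_
      refine ContinuousAt.div (by fun_prop) (by fun_prop) (by positivity))
  rw [add_comm (Real.exp (-η)) 1, ← key, mellinInv]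
  simp only [hm]
  have hπ : (π : ℂ) ≠ 0 := by exact_mod_cast Real.pi_ne_zero
  have hint : ∀ t : ℝ, ((Real.exp (-η) : ℝ) : ℂ) ^ (-((c : ℂ) + t * Complex.I)) •
      ((π : ℂ) / Complex.sin ((π : ℂ) * ((c : ℂ) + t * Complex.I))) =
      (π : ℂ) * (Complex.exp ((η : ℂ) * ((c : ℂ) + t * Complex.I)) /
        Complex.sin ((π : ℂ) * ((c : ℂ) + t * Complex.I))) := by
    intro t
    rw [cpow_def_of_ne_zero (by exact_mod_cast hx.ne'), ← ofReal_log hx.le, Real.log_exp,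
      smul_eq_mul]
    have : ((-η : ℝ) : ℂ) * -((c : ℂ) + t * Complex.I) = η * ((c : ℂ) + t * Complex.I) := by
      push_cast; ring
    rw [this]
    ring
  simp only [hint]
  rw [integral_const_mul, real_smul, ← mul_assoc]
  congr 1
  push_cast
  field_simp
end

section
/- Let 0 < c < 1 and k ∈ ℕ, and define Φ_k^{(1)}(η) = (1/2) ∫_{-∞}^∞ e^{η(c+it)} (c+it)^k / sin(π(c+it)) dt for η ∈ ℝ. Then Φ_k^{(1)} is differentiable on ℝ and (d/dη) Φ_k^{(1)}(η) = Φ_{k+1}^{(1)}(η) for every η ∈ ℝ. -/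
open Real MeasureTheory Complex

/-- The auxiliary function `Φ_k^{(1)}(η)`. -/
noncomputable def Phi1 (c : ℝ) (k : ℕ) (η : ℝ) : ℂ :=
  (1 / 2 : ℂ) * ∫ t : ℝ, Complex.exp ((η : ℂ) * ((c : ℂ) + t * Complex.I)) *
      ((c : ℂ) + t * Complex.I) ^ k / Complex.sin ((π : ℂ) * ((c : ℂ) + t * Complex.I))

lemma sin_lower (c : ℝ) (hc0 : 0 < c) (hc1 : c < 1) (t : ℝ) :
    Real.sin (π * c) * (Real.exp (2 * |t|) / 2) ≤
      ‖Complex.sin ((π : ℂ) * ((c : ℂ) + t * Complex.I))‖ := by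
  have hs : 0 < Real.sin (π * c) :=
    Real.sin_pos_of_pos_of_lt_pi (by positivity) (by nlinarith [Real.pi_pos])
  have hre : (Complex.sin ((π : ℂ) * ((c : ℂ) + t * Complex.I))).re
      = Real.sin (π * c) * Real.cosh (π * t) := by
    have : (π : ℂ) * ((c : ℂ) + t * Complex.I)
        = ((π * c : ℝ) : ℂ) + ((π * t : ℝ) : ℂ) * Complex.I := by push_cast; ring
    rw [this, Complex.sin_add_mul_I, ← Complex.ofReal_sin, ← Complex.ofReal_cosh,
      ← Complex.ofReal_cos, ← Complex.ofReal_sinh]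
    simp only [Complex.add_re, Complex.mul_re, Complex.ofReal_re,
      Complex.ofReal_im, Complex.mul_im, Complex.I_re, Complex.I_im]
    ring
  have h1 : Real.exp (2 * |t|) / 2 ≤ Real.cosh (π * t) := by
    rw [← Real.cosh_abs, abs_mul, abs_of_pos Real.pi_pos, Real.cosh_eq]
    have : Real.exp (2 * |t|) ≤ Real.exp (π * |t|) :=
      Real.exp_le_exp.2 (mul_le_mul_of_nonneg_right Real.two_le_pi (abs_nonneg t))
    have := Real.exp_pos (-(π * |t|))
    linarith
  calc _ ≤ Real.sin (π * c) * Real.cosh (π * t) := mul_le_mul_of_nonneg_left h1 hs.le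
    _ ≤ _ := by rw [← hre]; exact Complex.re_le_norm _

lemma pow_upper (c : ℝ) (hc0 : 0 < c) (hc1 : c < 1) (k : ℕ) (t : ℝ) :
    ‖((c : ℂ) + t * Complex.I) ^ k‖ ≤ k.factorial * (Real.exp 1 * Real.exp |t|) := by
  have h : ‖(c : ℂ) + t * Complex.I‖ ≤ 1 + |t| := by
    refine (norm_add_le _ _).trans ?_
    simp [abs_of_pos hc0, hc1.le]
  rw [norm_pow, ← Real.exp_add]
  have h2 := Real.pow_div_factorial_le_exp (1 + |t|) (by positivity) k
  rw [div_le_iff₀ (by positivity)] at h2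
  have := pow_le_pow_left₀ (norm_nonneg _) h k
  linarith

lemma kernel_bound (c : ℝ) (hc0 : 0 < c) (hc1 : c < 1) (k : ℕ) (t : ℝ) :
    ‖((c : ℂ) + t * Complex.I) ^ k / Complex.sin ((π : ℂ) * ((c : ℂ) + t * Complex.I))‖ ≤
      (4 * k.factorial * Real.exp 1 / Real.sin (π * c)) * (1 + t ^ 2)⁻¹ := by
  have hs : 0 < Real.sin (π * c) :=
    Real.sin_pos_of_pos_of_lt_pi (by positivity) (by nlinarith [Real.pi_pos])
  have hq : 1 + t ^ 2 ≤ 2 * Real.exp |t| := by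
    have := Real.quadratic_le_exp_of_nonneg (abs_nonneg t)
    have h3 := sq_abs t
    have := abs_nonneg t
    linarith
  have he : Real.exp (2 * |t|) = Real.exp |t| * Real.exp |t| := by
    rw [← Real.exp_add]; ring_nf
  rw [norm_div]
  calc _ ≤ (k.factorial * (Real.exp 1 * Real.exp |t|)) /
        (Real.sin (π * c) * (Real.exp (2 * |t|) / 2)) :=
        div_le_div₀ (by positivity) (pow_upper c hc0 hc1 k t) (by positivity)
          (sin_lower c hc0 hc1 t)
    _ = (4 * k.factorial * Real.exp 1 / Real.sin (π * c)) * (2 * Real.exp |t|)⁻¹ := by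
        rw [he]; field_simp; norm_num
    _ ≤ _ := by gcongr

lemma full_bound (c : ℝ) (hc0 : 0 < c) (hc1 : c < 1) (k : ℕ) (x M : ℝ) (hx : |x| ≤ M) (t : ℝ) :
    ‖Complex.exp ((x : ℂ) * ((c : ℂ) + t * Complex.I)) *
      ((c : ℂ) + t * Complex.I) ^ k / Complex.sin ((π : ℂ) * ((c : ℂ) + t * Complex.I))‖ ≤
      Real.exp M * ((4 * k.factorial * Real.exp 1 / Real.sin (π * c)) * (1 + t ^ 2)⁻¹) := by
  rw [mul_div_assoc, norm_mul]
  refine mul_le_mul ?_ (kernel_bound c hc0 hc1 k t) (norm_nonneg _) (Real.exp_pos _).le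
  rw [Complex.norm_exp]
  refine Real.exp_le_exp.2 ?_
  simp
  nlinarith [le_abs_self x, abs_nonneg x]

lemma meas_F (c : ℝ) (k : ℕ) (x : ℝ) : AEStronglyMeasurable (fun t : ℝ =>
    Complex.exp ((x : ℂ) * ((c : ℂ) + t * Complex.I)) *
      ((c : ℂ) + t * Complex.I) ^ k / Complex.sin ((π : ℂ) * ((c : ℂ) + t * Complex.I)))
    volume := by
  apply Measurable.aestronglyMeasurable
  apply Measurable.div
  · exact Continuous.measurable (by fun_prop)
  · exact Continuous.measurable (by fun_prop)

theorem stmt16 (c : ℝ) (hc0 : 0 < c) (hc1 : c < 1) (k : ℕ) (η : ℝ) :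
    HasDerivAt (fun η : ℝ => Phi1 c k η) (Phi1 c (k + 1) η) η := by
  unfold Phi1
  apply HasDerivAt.const_mul
  have hint : ∀ (j : ℕ) (M : ℝ), Integrable (fun t : ℝ =>
      Real.exp M * ((4 * j.factorial * Real.exp 1 / Real.sin (π * c)) * (1 + t ^ 2)⁻¹)) :=
    fun j M => (integrable_inv_one_add_sq.const_mul _).const_mul _
  refine (hasDerivAt_integral_of_dominated_loc_of_deriv_le (μ := volume)
    (Metric.ball_mem_nhds η one_pos) (Filter.Eventually.of_forall fun x => meas_F c k x)
    ((hint k |η|).mono' (meas_F c k η)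
      (Filter.Eventually.of_forall fun t => full_bound c hc0 hc1 k η _ le_rfl t))
    (F' := fun (x : ℝ) (t : ℝ) => Complex.exp ((x : ℂ) * ((c : ℂ) + t * Complex.I)) *
      ((c : ℂ) + t * Complex.I) ^ (k + 1) / Complex.sin ((π : ℂ) * ((c : ℂ) + t * Complex.I)))
    (meas_F c (k + 1) η)
    (Filter.Eventually.of_forall fun t x hx => full_bound c hc0 hc1 (k + 1) x (|η| + 1) ?_ t)
    (hint (k + 1) (|η| + 1)) (Filter.Eventually.of_forall fun t x _ => ?_)).2
  · rw [Metric.mem_ball, Real.dist_eq] at hx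
    have := abs_sub_abs_le_abs_sub x η
    linarith
  · have h1 : HasDerivAt (fun x : ℝ => (x : ℂ) * ((c : ℂ) + t * Complex.I))
        (1 * ((c : ℂ) + t * Complex.I)) x := (HasDerivAt.ofReal_comp (hasDerivAt_id x)).mul_const _
    have h2 := ((h1.cexp).mul_const (((c : ℂ) + t * Complex.I) ^ k)).div_const
      (Complex.sin ((π : ℂ) * ((c : ℂ) + t * Complex.I)))
    refine h2.congr_deriv ?_
    rw [pow_succ]
    ring
end

section
/- Let −1 < q < ∞ with q not a nonnegative integer, let η ∈ ℝ, and set μ = q+1. Define f(θ) = [e^{−η−cos θ} cos(μθ + sin θ) + cos(μθ)] / [1 + 2 e^{−η−cos θ} cos(sin θ) + e^{−2η−2cos θ}]. Then (1/Γ(q+1)) ∫_0^1 x^q/(e^{x−η}+1) dx = (Γ(−q)/π) ∫_0^π f(θ) dθ. -/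
open Real MeasureTheory Set

lemma hasSum_congr_aux {E : Type*} [AddCommMonoid E] [TopologicalSpace E] {f g : ℕ → E} {a b : E}
    (h : HasSum f a) (hfg : ∀ n, g n = f n) (hab : b = a) : HasSum g b := by
  rw [hab, funext hfg]; exact h

lemma denom_ne (η : ℝ) (z : ℂ) (hz : ‖z‖ < 3/2) : Complex.exp (z - η) + 1 ≠ 0 := by
  intro h
  have h1 := congrArg Complex.re h
  simp [Complex.exp_re] at h1
  have h2 : |z.im| < 3/2 := (Complex.abs_im_le_norm z).trans_lt hz
  have h3 : 0 < Real.cos z.im := by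
    have := Real.pi_gt_three
    rw [abs_lt] at h2
    apply Real.cos_pos_of_mem_Ioo
    constructor <;> linarith
  have := mul_pos (Real.exp_pos (z.re - η)) h3
  linarith

lemma exists_coeff (η : ℝ) : ∃ c : ℕ → ℝ, Summable (fun n => |c n|) ∧
    ∀ z : ℂ, ‖z‖ < 3/2 → HasSum (fun n => (c n : ℂ) * z ^ n) (1 / (Complex.exp (z - η) + 1)) := by
  let g : ℂ → ℂ := fun z => 1 / (Complex.exp (z - η) + 1)
  have hg : DifferentiableOn ℂ g (Metric.ball 0 (3/2 : ℝ)) := by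
    intro z hz
    have := denom_ne η z (by simpa using hz)
    apply DifferentiableAt.differentiableWithinAt
    fun_prop (disch := assumption)
  obtain ⟨a, ha⟩ : ∃ a : ℕ → ℂ, ∀ z : ℂ, ‖z‖ < 3/2 → HasSum (fun n => a n * z ^ n) (g z) := by
    refine ⟨fun n => (n.factorial : ℂ)⁻¹ * iteratedDeriv n g 0, fun z hz => ?_⟩
    have := Complex.hasSum_taylorSeries_on_ball hg (z := z) (by simpa using hz)
    refine hasSum_congr_aux this (fun n => ?_) rfl
    simp only [smul_eq_mul, sub_zero]
    ring
  have key : ∀ z : ℂ, ‖z‖ < 3/2 → HasSum (fun n => ((a n).re : ℂ) * z ^ n) (g z) := by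
    intro z hz
    have h1 := ha z hz
    have h2 := ha (starRingEnd ℂ z) (by simpa using hz)
    have h3 := (Complex.hasSum_conj' (x := g (starRingEnd ℂ z))).mpr (by simpa using h2)
    have h4 : starRingEnd ℂ (g (starRingEnd ℂ z)) = g z := by
      simp [g, ← Complex.exp_conj]
    have h5 := (h1.add h3).mul_left (1/2 : ℂ)
    rw [h4] at h5
    refine hasSum_congr_aux h5 (fun n => ?_) ?_
    · show ((a n).re : ℂ) * z ^ n = _
      rw [Complex.re_eq_add_conj]
      simp
      ring
    · ring
  refine ⟨fun n => (a n).re, ?_, key⟩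
  have := (key 1 (by norm_num)).summable.norm
  simpa using this

lemma part1 (q η : ℝ) (hq : -1 < q) (c : ℕ → ℝ) (hc : Summable (fun n => |c n|))
    (h : ∀ z : ℂ, ‖z‖ < 3/2 → HasSum (fun n => (c n : ℂ) * z ^ n) (1 / (Complex.exp (z - η) + 1))) :
    HasSum (fun n => c n / (q + 1 + n)) (∫ x in (0 : ℝ)..1, x ^ q / (Real.exp (x - η) + 1)) := by
  have hi : IntervalIntegrable (fun x : ℝ => x ^ q) volume 0 1 :=
    intervalIntegral.intervalIntegrable_rpow' hq
  have := intervalIntegral.hasSum_integral_of_dominated_convergence (μ := volume) (a := 0) (b := 1)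
    (F := fun n x => c n * x ^ (q + n)) (f := fun x : ℝ => x ^ q / (Real.exp (x - η) + 1))
    (fun n x => |c n| * x ^ q) (fun n => by
      apply Measurable.aestronglyMeasurable
      fun_prop) (fun n => by
      refine Filter.Eventually.of_forall fun x hx => ?_
      rw [uIoc_of_le zero_le_one] at hx
      rw [norm_mul, Real.norm_eq_abs, Real.norm_eq_abs, abs_of_nonneg (Real.rpow_nonneg hx.1.le _)]
      gcongr ?_ * ?_
      exact Real.rpow_le_rpow_of_exponent_ge hx.1 hx.2 (by simp))
      (Filter.Eventually.of_forall fun x hx => hc.mul_right _)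
      (by
        simp_rw [tsum_mul_right]
        exact hi.const_mul _)
      (by
        refine Filter.Eventually.of_forall fun x hx => ?_
        rw [uIoc_of_le zero_le_one] at hx
        have h1 := h x (by
          rw [Complex.norm_real, Real.norm_eq_abs, abs_of_pos hx.1]; linarith [hx.2])
        have h2 : HasSum (fun n => c n * x ^ n) (1 / (Real.exp (x - η) + 1)) := by
          apply Complex.hasSum_ofReal.mp
          push_cast
          exact h1
        have h3 := h2.mul_left (x ^ q)
        refine hasSum_congr_aux h3 (fun n => ?_) ?_
        · rw [Real.rpow_add hx.1, Real.rpow_natCast]; ring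
        · ring)
  refine hasSum_congr_aux this (fun n => ?_) rfl
  have hn : (0 : ℝ) ≤ n := n.cast_nonneg
  rw [intervalIntegral.integral_const_mul, integral_rpow (Or.inl (by linarith)), Real.one_rpow,
    Real.zero_rpow (by linarith)]
  rw [sub_zero, mul_one_div]
  congr 1
  ring

lemma integrand_eq (q η θ : ℝ) :
    (Complex.exp (((q + 1) * θ : ℝ) * Complex.I) *
      (1 / (Complex.exp (-Complex.exp (θ * Complex.I) - η) + 1))).re =
    (Real.exp (-η - Real.cos θ) * Real.cos ((q + 1) * θ + Real.sin θ) +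
            Real.cos ((q + 1) * θ)) /
          (1 + 2 * Real.exp (-η - Real.cos θ) * Real.cos (Real.sin θ) +
            Real.exp (-2 * η - 2 * Real.cos θ)) := by
  have e2 : Real.exp (-2 * η - 2 * Real.cos θ) = Real.exp (-η - Real.cos θ) ^ 2 := by
    rw [← Real.exp_nat_mul]; congr 1; push_cast; ring
  have e1 : Complex.exp (-Complex.exp (θ * Complex.I) - η) + 1 =
      ⟨Real.exp (-η - Real.cos θ) * Real.cos (Real.sin θ) + 1,
        -(Real.exp (-η - Real.cos θ) * Real.sin (Real.sin θ))⟩ := by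
    have hr : (-Complex.exp (θ * Complex.I) - η).re = -η - Real.cos θ := by
      simp [Complex.exp_ofReal_mul_I_re]; ring
    have hi : (-Complex.exp (θ * Complex.I) - η).im = - Real.sin θ := by
      simp [Complex.exp_ofReal_mul_I_im]
    apply Complex.ext
    · rw [Complex.add_re, Complex.exp_re, hr, hi]; simp
    · rw [Complex.add_im, Complex.exp_im, hr, hi]; simp
  rw [e1, e2, mul_one_div, Complex.div_re, Complex.exp_ofReal_mul_I_re, Complex.exp_ofReal_mul_I_im,
    Real.cos_add, Complex.normSq_mk, ← add_div]
  congr 1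
  · ring
  · linear_combination Real.exp (-η - Real.cos θ) ^ 2 * Real.sin_sq_add_cos_sq (Real.sin θ)

lemma part2 (q η : ℝ) (hq : -1 < q) (c : ℕ → ℝ) (hc : Summable (fun n => |c n|))
    (h : ∀ z : ℂ, ‖z‖ < 3/2 → HasSum (fun n => (c n : ℂ) * z ^ n) (1 / (Complex.exp (z - η) + 1))) :
    HasSum (fun n => Real.sin (π * (q + 1)) * (c n / (q + 1 + n))) (∫ θ in (0 : ℝ)..π,
        (Real.exp (-η - Real.cos θ) * Real.cos ((q + 1) * θ + Real.sin θ) +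
            Real.cos ((q + 1) * θ)) /
          (1 + 2 * Real.exp (-η - Real.cos θ) * Real.cos (Real.sin θ) +
            Real.exp (-2 * η - 2 * Real.cos θ))) := by
  have := intervalIntegral.hasSum_integral_of_dominated_convergence (μ := volume) (a := 0) (b := π)
    (F := fun n θ => (c n * (-1) ^ n) * Real.cos ((q + 1 + n) * θ))
    (f := fun θ => (Real.exp (-η - Real.cos θ) * Real.cos ((q + 1) * θ + Real.sin θ) +
            Real.cos ((q + 1) * θ)) /
          (1 + 2 * Real.exp (-η - Real.cos θ) * Real.cos (Real.sin θ) +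
            Real.exp (-2 * η - 2 * Real.cos θ)))
    (fun n _ => |c n|) (fun n => by
      apply Measurable.aestronglyMeasurable
      fun_prop) (fun n => by
      refine Filter.Eventually.of_forall fun x hx => ?_
      rw [norm_mul, norm_mul, norm_pow, norm_neg, norm_one, one_pow, mul_one, Real.norm_eq_abs,
        Real.norm_eq_abs]
      exact mul_le_of_le_one_right (abs_nonneg _) (Real.abs_cos_le_one _))
      (Filter.Eventually.of_forall fun x hx => hc)
      (by simp)
      (by
        refine Filter.Eventually.of_forall fun θ hx => ?_
        rw [← integrand_eq]
        have h1 := h (-Complex.exp (θ * Complex.I)) (by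
          rw [norm_neg, Complex.norm_exp_ofReal_mul_I]; norm_num)
        have h3 := Complex.hasSum_re (h1.mul_left (Complex.exp (((q + 1) * θ : ℝ) * Complex.I)))
        refine hasSum_congr_aux h3 (fun n => ?_) rfl
        have : Complex.exp (((q + 1) * θ : ℝ) * Complex.I) *
            ((c n : ℂ) * (-Complex.exp (θ * Complex.I)) ^ n) =
            ((c n * (-1) ^ n : ℝ) : ℂ) * Complex.exp (((q + 1 + n) * θ : ℝ) * Complex.I) := by
          rw [neg_pow, ← Complex.exp_nat_mul]
          have : (((q + 1 + n) * θ : ℝ) : ℂ) * Complex.I = (((q + 1) * θ : ℝ) : ℂ) * Complex.I +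
            n * (θ * Complex.I) := by push_cast; ring
          rw [this, Complex.exp_add]
          push_cast
          ring
        rw [this, Complex.re_ofReal_mul, Complex.exp_ofReal_mul_I_re])
  refine hasSum_congr_aux this (fun n => ?_) rfl
  have hn : (0 : ℝ) ≤ n := n.cast_nonneg
  have hne : q + 1 + n ≠ 0 := by linarith
  rw [intervalIntegral.integral_const_mul, intervalIntegral.integral_comp_mul_left _ hne,
    integral_cos, mul_zero, Real.sin_zero, sub_zero, smul_eq_mul, add_mul, Real.sin_add_nat_mul_pi]
  have : ((-1 : ℝ) ^ n) * (-1) ^ n = 1 := by rw [← mul_pow]; simp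
  rw [mul_comm π]
  linear_combination (-(c n * (q + 1 + n)⁻¹ * Real.sin ((q + 1) * π))) * this

theorem stmt17 (q η : ℝ) (hq : -1 < q) (hqi : ∀ n : ℕ, q ≠ n) :
    (1 / Real.Gamma (q + 1)) * ∫ x in (0 : ℝ)..1, x ^ q / (Real.exp (x - η) + 1) =
      (Real.Gamma (-q) / π) * ∫ θ in (0 : ℝ)..π,
        (Real.exp (-η - Real.cos θ) * Real.cos ((q + 1) * θ + Real.sin θ) +
            Real.cos ((q + 1) * θ)) /
          (1 + 2 * Real.exp (-η - Real.cos θ) * Real.cos (Real.sin θ) +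
            Real.exp (-2 * η - 2 * Real.cos θ)) := by
  obtain ⟨c, hc, h⟩ := exists_coeff η
  have h1 := part1 q η hq c hc h
  have h2 := part2 q η hq c hc h
  rw [h2.unique (h1.mul_left _)]
  have hs : Real.sin (π * (q + 1)) ≠ 0 := by
    intro h0
    obtain ⟨k, hk⟩ := Real.sin_eq_zero_iff.mp h0
    have hk' : (k : ℝ) = q + 1 := by
      apply mul_right_cancel₀ Real.pi_ne_zero; linarith
    have hk0 : 0 < k := by
      have : (0 : ℝ) < k := by linarith
      exact_mod_cast this
    obtain ⟨m, hm⟩ := Int.eq_ofNat_of_zero_le (show 0 ≤ k - 1 by omega)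
    apply hqi m
    have : ((k - 1 : ℤ) : ℝ) = m := by rw [hm]; simp
    push_cast at this
    linarith
  have hG := Real.Gamma_mul_Gamma_one_sub (q + 1)
  rw [show 1 - (q + 1) = -q by ring] at hG
  have hGp : Real.Gamma (q + 1) ≠ 0 := (Real.Gamma_pos_of_pos (by linarith)).ne'
  have hpi := Real.pi_ne_zero
  rw [eq_div_iff hs] at hG
  rw [← mul_assoc]
  congr 1
  field_simp
  rw [mul_comm π] at hG
  linarith
end

section
/- For every nonnegative integer k, the function z ↦ 1/Γ(z) (which is entire) has derivative at z = −k equal to (−1)^k k!; equivalently, the derivative of q ↦ 1/Γ(q+1) at q = −k−1 equals (−1)^k k!. -/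
theorem inv_Gamma_step (s d : ℂ)
    (h : HasDerivAt (fun z : ℂ => (Complex.Gamma z)⁻¹) d (s + 1)) :
    HasDerivAt (fun z : ℂ => (Complex.Gamma z)⁻¹)
      ((Complex.Gamma (s + 1))⁻¹ + s * d) s := by
  rw [funext Complex.one_div_Gamma_eq_self_mul_one_div_Gamma_add_one]
  have h2 : HasDerivAt (fun z : ℂ => (Complex.Gamma (z + 1))⁻¹) d s :=
    HasDerivAt.comp_add_const s 1 h
  have h3 := (hasDerivAt_id s).mul h2
  simpa using! h3

theorem inv_Gamma_deriv (k : ℕ) :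
    HasDerivAt (fun z : ℂ => (Complex.Gamma z)⁻¹)
        ((-1 : ℂ) ^ k * k.factorial) (-(k : ℂ)) := by
  induction k with
  | zero =>
    have h := inv_Gamma_step 0 _ (Complex.differentiable_one_div_Gamma (0 + 1)).hasDerivAt
    simpa using h
  | succ k ih =>
    have e : (-((k + 1 : ℕ) : ℂ)) + 1 = -(k : ℂ) := by push_cast; ring
    have h := inv_Gamma_step (-((k + 1 : ℕ) : ℂ)) _ (e ▸ ih)
    rw [e, Complex.Gamma_neg_nat_eq_zero] at h
    convert h using 1
    rw [Nat.factorial_succ]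
    push_cast
    rw [inv_zero]
    ring

theorem stmt18 (k : ℕ) :
    HasDerivAt (fun z : ℂ => 1 / Complex.Gamma z)
        ((-1 : ℂ) ^ k * k.factorial) (-(k : ℂ)) ∧
    HasDerivAt (fun q : ℂ => 1 / Complex.Gamma (q + 1))
        ((-1 : ℂ) ^ k * k.factorial) (-(k : ℂ) - 1) := by
  simp only [one_div]
  refine ⟨inv_Gamma_deriv k, ?_⟩
  apply HasDerivAt.comp_add_const (f := fun z : ℂ => (Complex.Gamma z)⁻¹) (-(k : ℂ) - 1) 1
  rw [sub_add_cancel]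
  exact inv_Gamma_deriv k
end

section
/- Let η ∈ ℝ and k ∈ ℕ, and for real q define G(q) = (1/Γ(q+1)) ∫_1^∞ x^q/(e^{x−η}+1) dx (the integral converging for every real q, and 1/Γ(q+1) = 0 at q = −1,−2,...). Then G is differentiable at q = −k−1 and G'(−k−1) = (−1)^k k! ∫_1^∞ x^{−k−1}/(e^{x−η}+1) dx. -/
open Real MeasureTheory Set

lemma aux_int (η q : ℝ) :
    IntegrableOn (fun x : ℝ => x ^ q / (Real.exp (x - η) + 1)) (Ioi 1) := by
  have h := (Real.GammaIntegral_convergent (s := |q| + 1) (by positivity)).mono_set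
    (Ioi_subset_Ioi (zero_le_one (α := ℝ)))
  have h2 := h.const_mul (Real.exp η)
  refine Integrable.mono' h2 ?_ ?_
  · exact (by fun_prop : Measurable (fun x : ℝ => x ^ q / (Real.exp (x - η) + 1))).aestronglyMeasurable
  · refine (ae_restrict_iff' measurableSet_Ioi).2 (Filter.Eventually.of_forall fun x hx => ?_)
    have hx1 : (1 : ℝ) < x := hx
    have hx0 : 0 < x := by linarith
    have e : Real.exp η * (Real.exp (-x) * x ^ (|q| + 1 - 1)) = x ^ |q| / Real.exp (x - η) := by
      rw [Real.exp_sub, Real.exp_neg, add_sub_cancel_right]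
      field_simp
    rw [Real.norm_of_nonneg (by positivity), e]
    have := Real.rpow_le_rpow_of_exponent_le hx1.le (le_abs_self q)
    gcongr
    linarith

lemma aux_rec (s : ℝ) : (Real.Gamma s)⁻¹ = s * (Real.Gamma (s + 1))⁻¹ := by
  rcases eq_or_ne s 0 with rfl | h
  · simp
  · rw [Real.Gamma_add_one h]
    have := h
    rw [mul_inv, ← mul_assoc, mul_inv_cancel₀ h, one_mul]

lemma aux_gamma (k : ℕ) :
    HasDerivAt (fun s : ℝ => (Real.Gamma s)⁻¹) ((-1 : ℝ) ^ k * k.factorial) (-(k : ℝ)) := by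
  have hf : (fun s : ℝ => (Real.Gamma s)⁻¹) = fun s => s * (Real.Gamma (s + 1))⁻¹ :=
    funext aux_rec
  induction k with
  | zero =>
    rw [hf]
    have hd : DifferentiableAt ℝ (fun s : ℝ => (Real.Gamma (s + 1))⁻¹) 0 := by
      have h1 : DifferentiableAt ℝ Real.Gamma (0 + 1) := by
        apply Real.differentiableAt_Gamma
        intro m hm
        have : (0 : ℝ) ≤ m := Nat.cast_nonneg m
        linarith
      exact (h1.hasDerivAt.comp_add_const 0 1).differentiableAt.inv (by simp)
    have := (hasDerivAt_id' (0 : ℝ)).mul hd.hasDerivAt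
    refine HasDerivAt.congr_deriv (f := fun s : ℝ => s * (Real.Gamma (s + 1))⁻¹)
      (x := -((0 : ℕ) : ℝ)) (f' := 1 * (Real.Gamma (0 + 1))⁻¹ + 0 *
        deriv (fun s : ℝ => (Real.Gamma (s + 1))⁻¹) 0) ?_ (by simp)
    rw [Nat.cast_zero, neg_zero]
    exact this
  | succ k ih =>
    rw [hf]
    have e : -((k + 1 : ℕ) : ℝ) + 1 = -(k : ℝ) := by push_cast; ring
    rw [← e] at ih
    have h := (hasDerivAt_id' (-((k + 1 : ℕ) : ℝ))).mul (ih.comp_add_const _ 1)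
    refine HasDerivAt.congr_deriv (f := fun s : ℝ => s * (Real.Gamma (s + 1))⁻¹) h ?_
    rw [e, Real.Gamma_neg_nat_eq_zero, Nat.factorial_succ]
    push_cast
    ring

lemma aux_mul {f g : ℝ → ℝ} {f' a : ℝ} (hf : HasDerivAt f f' a) (h0 : f a = 0)
    (hg : ContinuousAt g a) : HasDerivAt (fun x => f x * g x) (f' * g a) a := by
  rw [hasDerivAt_iff_tendsto_slope] at hf ⊢
  refine (hf.mul (hg.tendsto.mono_left nhdsWithin_le_nhds)).congr fun x => ?_
  simp [slope_def_field, h0]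
  ring

lemma aux_cont (η a : ℝ) :
    ContinuousAt (fun q : ℝ => ∫ x in Ioi (1 : ℝ), x ^ q / (Real.exp (x - η) + 1)) a := by
  refine continuousAt_of_dominated
    (bound := fun x => x ^ (a + 1) / (Real.exp (x - η) + 1)) ?_ ?_ (aux_int η (a + 1)) ?_
  · exact Filter.Eventually.of_forall fun q => (aux_int η q).aestronglyMeasurable
  · filter_upwards [Iio_mem_nhds (lt_add_one a)] with q hq
    refine (ae_restrict_iff' measurableSet_Ioi).2 (Filter.Eventually.of_forall fun x hx => ?_)
    have hx1 : (1 : ℝ) < x := hx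
    have hx0 : 0 < x := by linarith
    rw [Real.norm_of_nonneg (by positivity)]
    have := Real.rpow_le_rpow_of_exponent_le hx1.le (le_of_lt hq)
    gcongr
  · refine (ae_restrict_iff' measurableSet_Ioi).2 (Filter.Eventually.of_forall fun x hx => ?_)
    have hx1 : (1 : ℝ) < x := hx
    exact (Real.continuousAt_const_rpow (by linarith)).div_const _

theorem stmt19 (η : ℝ) (k : ℕ) :
    (∀ q : ℝ, IntegrableOn (fun x : ℝ => x ^ q / (Real.exp (x - η) + 1)) (Ioi 1)) ∧
    HasDerivAt
      (fun q : ℝ => (1 / Real.Gamma (q + 1)) *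
        ∫ x in Ioi (1 : ℝ), x ^ q / (Real.exp (x - η) + 1))
      ((-1 : ℝ) ^ k * k.factorial *
        ∫ x in Ioi (1 : ℝ), x ^ (-(k : ℝ) - 1) / (Real.exp (x - η) + 1))
      (-(k : ℝ) - 1) := by
  refine ⟨aux_int η, ?_⟩
  have e : -(k : ℝ) - 1 + 1 = -(k : ℝ) := by ring
  have h := aux_gamma k
  rw [← e] at h
  have h2 := h.comp_add_const _ 1
  simp only [one_div]
  refine aux_mul h2 ?_ (aux_cont η _)
  simp only [e, Real.Gamma_neg_nat_eq_zero, inv_zero]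
end
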